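/- Integrality of the Schur lattice under divided powers: for i ∈ {0,1}, let ℒ_i ⊆ W_i be the ℤ[q,q^{−1}]-submodule spanned by the vectors s_λ e^{mα}e^{iα/2}, where λ runs over all partitions and m over ℤ. Then for every n ∈ ℤ and r ≥ 1, X_n^{+(r)}(ℒ_i) ⊆ ℒ_i and X_n^{−(r)}(ℒ_i) ⊆ ℒ_i. -/

import Mathlib

/-! Let `Λ` be the ring of symmetric functions over `ℚ(q)`, and `h(z) = ∑ h_k z^k`. By the
Jacobi–Trudi determinant and its triangularity, the `ℤ[q,q⁻¹]`-span of the Schur functions is the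
subring `𝒜 = ℤ[q,q⁻¹][h₁,h₂,…]`, so the lattice consists of the vectors with all components in `𝒜`.

*One vertex operator.* By Taylor's formula the annihilation half of `X^±` is the substitution
`D : p_n ↦ p_n + d_n wⁿ`, with `d_n = -q⁻ⁿ` for `X⁺` and `d_n = 1` for `X⁻`. Hence `X_n^±` acts by
`P ↦ φ_c (D P)`, where `φ_c` is the `Λ`-linear map `w^j ↦ H_{c+j}`, the `H_k` being the creation
coefficients. Their generating series satisfies `D (H(z)) = H(z) (1 - w z) (1 - t w z)`, with
`t = q⁻²` for `X⁺` and `t = q²` for `X⁻`.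

*Iteration.* Each application lowers `c` by `2`, which exactly absorbs the degree of the contraction
factors. With `Φ` the `Λ`-linear map `∏ w_i^{k_i} ↦ ∏ H_{b+k_i}`, an application that introduces the
variable `w_r` multiplies the argument of `Φ` by `∏_{i<r} (w_i - w_r) (w_i - t w_r)`. The factors
`w_i - w_r` build up the Vandermonde product, which makes the symmetric functional `Φ`
antisymmetric, and an antisymmetric functional sends `∏_{i<r} (w_i - t w_r) w_i^i` to
`±(1 + t + ⋯ + t^r)` times its value at `∏_{i≤r} w_i^i`. Therefore the `r`-fold iterate is
`∏_{k=1}^r (1 + t + ⋯ + t^{k-1}) · Φ (∏ w_i^i · ∏_{i<j} (w_j - w_i) · D^{(r)} P)`, where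
`D^{(r)} : p_n ↦ p_n + d_n ∑_{i<r} w_iⁿ`, and the scalar is `[r]!` up to a power of `q`.

*Integrality.* The second factor lies in `𝒜`: the `H_k` do, because `H(z)` is `h(q z) h(q⁻¹ z)` or
`1 / (h(z) h(q² z))`, and `D` preserves integrality because it sends `h(z)` to
`h(z) (1 - q⁻¹ w z)` or `h(z) / (1 - w z)`.
-/

open MvPolynomial

noncomputable section

/-- The base field `F = ℚ(q)`. -/
abbrev Fq : Type := RatFunc ℚ

/-- The indeterminate `q ∈ ℚ(q)`. -/
def qq : Fq := RatFunc.X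

/-- `Λ_F = F[p₁,p₂,…]`, with the variable `X n` (for `n : ℕ+`) the power sum `p_n`. -/
abbrev LamF : Type := MvPolynomial ℕ+ Fq

/-- The power sum `p_n`. -/
def ppF (n : ℕ+) : LamF := X n

/-- The family `g` with generating function `∑_k g_k t^k = exp (∑_{n≥1} c n · p_n tⁿ/n)`,
characterized by `g 0 = 1` and the recursion obtained by differentiating:
`(k+1) · g (k+1) = ∑_{i=0}^{k} c (i+1) · p_{i+1} · g (k−i)`. -/
def genFamF (c : ℕ → Fq) : ℕ → LamF
  | 0 => 1
  | (k+1) => (((k : Fq) + 1)⁻¹) •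
      ∑ i ∈ Finset.range (k+1), c (i+1) • (ppF ⟨i+1, Nat.succ_pos i⟩ * genFamF c (k - i))
  decreasing_by exact Nat.lt_succ_of_le (Nat.sub_le k i)

/-- The complete homogeneous symmetric function `h_k`. -/
def hhF : ℕ → LamF := genFamF fun _ => 1

/-- The elementary symmetric function `e_k`. -/
def eeF : ℕ → LamF := genFamF fun n => (-1)^(n+1)

/-- `h` indexed by `ℤ` (zero in negative degrees). -/
def hZF (n : ℤ) : LamF := if 0 ≤ n then hhF n.toNat else 0

/-- `e` indexed by `ℤ` (zero in negative degrees). -/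
def eZF (n : ℤ) : LamF := if 0 ≤ n then eeF n.toNat else 0

/-- The creation coefficients of `X⁺(z)`:
`exp (∑ ((1+q^{2n})q^{−n}/n)·p_n·zⁿ) = ∑_k HpF k · z^k`. -/
def HpF : ℕ → LamF := genFamF fun n => (1 + qq ^ (2*n)) * (qq⁻¹) ^ n

/-- `HpF` indexed by `ℤ`. -/
def HZp (n : ℤ) : LamF := if 0 ≤ n then HpF n.toNat else 0

/-- The annihilation avatars for `X⁺(z)`: since
`(1+q^{2n})q^{−n}/n · a_n = q^{−n}·∂/∂p_n`, the coefficient of `z^{−j}` in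
`exp (−∑ ((1+q^{2n})q^{−n}/n)·a_n·z^{−n})` is `ApF j` with `p_i ↦ i·∂/∂p_i`
substituted, where `∑_k ApF k t^k = exp (−∑ q^{−n} p_n tⁿ/n)`. -/
def ApF : ℕ → LamF := genFamF fun n => -((qq⁻¹) ^ n)

/-- The creation coefficients of `X⁻(z)`:
`exp (−∑ ((1+q^{2n})/n)·p_n·zⁿ) = ∑_k HmF k · z^k`. -/
def HmF : ℕ → LamF := genFamF fun n => -(1 + qq ^ (2*n))

/-- `HmF` indexed by `ℤ`. -/
def HZm (n : ℤ) : LamF := if 0 ≤ n then HmF n.toNat else 0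

/-- The differential operator `∏_i (i·∂/∂p_i)^(α i)`. -/
def monOpF (α : ℕ+ →₀ ℕ) : Module.End Fq LamF :=
  ((α.support.sort (· ≤ ·)).map fun (i : ℕ+) =>
    (((i : ℕ) : Fq) • (pderiv i).toLinearMap) ^ (α i)).prod

/-- `f(∂) P`: substitute `p_i ↦ i·∂/∂p_i` in `f` and apply to `P`. -/
def DopF (f : LamF) (P : LamF) : LamF := ∑ α ∈ f.support, f.coeff α • monOpF α P

/-- Bound for the weighted degree of `P` (weight of `p_i` is `i`). -/
def wboundF (P : LamF) : ℕ := P.support.sup fun α => α.sum fun i k => (i : ℕ) * k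

/-- The level-one Fock space `W_i = Λ_F ⊗ F[ℤα]e^{iα/2}`, realized as `ℤ →₀ Λ_F`;
`Finsupp.single m P` represents `P·e^{mα}e^{iα/2}`. -/
abbrev W : Type := ℤ →₀ LamF

/-- The Drinfeld current component `X_n^+` on `W_i` (the parameter `i ∈ {0,1}` enters
through `z^∂ e^{mα}e^{iα/2} = z^{2m+i} e^{mα}e^{iα/2}`): the coefficient of `z^{−n−1}` in
`X⁺(z) = exp(∑((1+q^{2n})q^{−n}/n)a_{−n}zⁿ)·exp(−∑((1+q^{2n})q^{−n}/n)a_n z^{−n})·e^α z^∂`,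
i.e. `X_n^+(P·e^{mα}) = ∑_j HpF_{j−n−1−2m−i} · (ApF j)(∂) P · e^{(m+1)α}`
(only the finitely many `j ≤ wboundF P` contribute). -/
def Xp (i n : ℤ) (w : W) : W :=
  w.sum fun m P => Finsupp.single (m+1)
    (∑ j ∈ Finset.range (wboundF P + 1),
      HZp ((j : ℤ) - n - 1 - 2*m - i) * DopF (ApF j) P)

/-- The Drinfeld current component `X_n^-` on `W_i`: the coefficient of `z^{−n−1}` in
`X⁻(z) = exp(−∑((1+q^{2n})/n)a_{−n}zⁿ)·exp(∑((1+q^{2n})/n)a_n z^{−n})·e^{−α} z^{−∂}`,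
i.e. `X_n^-(P·e^{mα}) = ∑_j HmF_{j+2m+i−n−1} · h_j(∂) P · e^{(m−1)α}`
(here `(1+q^{2n})/n · a_n = ∂/∂p_n`, whose generating family is `h`). -/
def Xm (i n : ℤ) (w : W) : W :=
  w.sum fun m P => Finsupp.single (m-1)
    (∑ j ∈ Finset.range (wboundF P + 1),
      HZm ((j : ℤ) + 2*m + i - n - 1) * DopF (hhF j) P)

/-- The `q`-factorial `[r]! = ∏_{k=1}^r (q^k − q^{−k})/(q − q^{−1})`. -/
def qfact (r : ℕ) : Fq := ∏ k ∈ Finset.range r, (qq ^ (k+1) - (qq⁻¹) ^ (k+1)) / (qq - qq⁻¹)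

/-- The divided power `x^{(r)} = x^r / [r]!` of an operator on `W`. -/
def divpow (f : W → W) (r : ℕ) (w : W) : W := (qfact r)⁻¹ • (f^[r] w)

/-- Schur function of an integer tuple: `s_ρ = det (h_{ρ_i − i + j})`. -/
def schurF {l : ℕ} (ρ : Fin l → ℤ) : LamF :=
  (Matrix.of fun i j : Fin l => hZF (ρ i - (i.1 : ℤ) + (j.1 : ℤ))).det

/-- Dual Schur function of an integer tuple: `s_{ρ'} = det (e_{ρ_i − i + j})`. -/
def schurEF {l : ℕ} (ρ : Fin l → ℤ) : LamF :=
  (Matrix.of fun i j : Fin l => eZF (ρ i - (i.1 : ℤ) + (j.1 : ℤ))).det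

/-- `q^{±∂}`: `q^{ε∂}(P·e^{mα}e^{iα/2}) = q^{ε(2m+i)}·P·e^{mα}e^{iα/2}`. -/
def qd (i ε : ℤ) (w : W) : W := w.sum fun m P => Finsupp.single m (qq ^ (ε * (2*m + i)) • P)

/-- The Chevalley generator `e₁ = X₀⁺`. -/
def che1 (i : ℤ) : W → W := Xp i 0
/-- The Chevalley generator `f₁ = X₀⁻`. -/
def chf1 (i : ℤ) : W → W := Xm i 0
/-- The Chevalley generator `e₀ = X₁⁻ ∘ q^{−∂}`. -/
def che0 (i : ℤ) (w : W) : W := Xm i 1 (qd i (-1) w)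
/-- The Chevalley generator `f₀ = q^∂ ∘ X₋₁⁺`. -/
def chf0 (i : ℤ) (w : W) : W := qd i 1 (Xp i (-1) w)


/-- The `ℤ[q,q⁻¹]`-lattice `ℒ ⊆ W` spanned by the vectors `s_λ e^{mα}e^{iα/2}`
(`λ` a partition, `m ∈ ℤ`): equivalently, the additive subgroup generated by all
`q^k · s_λ e^{mα}e^{iα/2}` with `k ∈ ℤ`. -/
def SchurLattice : AddSubgroup W :=
  AddSubgroup.closure
    {w | ∃ (k m : ℤ) (l : ℕ) (lam : Fin l → ℕ), Antitone lam ∧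
      w = qq ^ k • Finsupp.single m (schurF fun a => (lam a : ℤ))}

/-! ### Antisymmetric functionals -/

section Antisymmetric

variable {A M : Type*} [CommRing A] [AddCommGroup M] [Module A M]

/-- A linear functional on polynomials in `w₀, w₁, …` is antisymmetric in `w₀, …, w_r` if it changes
sign under the adjacent transpositions `w_i ↔ w_{i+1}`, `i < r`, which generate the symmetric group
on these variables. -/
def IsAntisymmetric (L : MvPolynomial ℕ A →ₗ[A] M) (r : ℕ) : Prop :=
  ∀ i < r, ∀ f, L (rename (Equiv.swap i (i + 1)) f) = -L f

lemma IsAntisymmetric.mono {L : MvPolynomial ℕ A →ₗ[A] M} {r s : ℕ} (hL : IsAntisymmetric L s)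
    (h : r ≤ s) : IsAntisymmetric L r :=
  fun i hi => hL i (hi.trans_le h)

lemma IsAntisymmetric.comp_mulRight {L : MvPolynomial ℕ A →ₗ[A] M} {r : ℕ}
    (hL : IsAntisymmetric L r) {g : MvPolynomial ℕ A}
    (hg : ∀ i < r, rename (Equiv.swap i (i + 1)) g = g) :
    IsAntisymmetric (L ∘ₗ LinearMap.mulRight A g) r := fun i hi f => by
  simpa only [LinearMap.comp_apply, LinearMap.mulRight_apply, map_mul, hg i hi] using
    hL i hi (f * g)

lemma IsAntisymmetric.eq_zero [IsAddTorsionFree M] {L : MvPolynomial ℕ A →ₗ[A] M} {r i : ℕ}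
    (hL : IsAntisymmetric L r) (hi : i < r) {f : MvPolynomial ℕ A}
    (hf : rename (Equiv.swap i (i + 1)) f = f) : L f = 0 :=
  self_eq_neg.mp (by simpa only [hf] using hL i hi f)

lemma rename_swap_X_of_lt {i k : ℕ} (h : i + 1 < k) :
    rename (Equiv.swap i (i + 1)) (X k : MvPolynomial ℕ A) = X k := by
  rw [rename_X, Equiv.swap_apply_of_ne_of_ne (by lia) (by lia)]

lemma rename_swap_X_of_gt {i k : ℕ} (h : k < i) :
    rename (Equiv.swap i (i + 1)) (X k : MvPolynomial ℕ A) = X k := by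
  rw [rename_X, Equiv.swap_apply_of_ne_of_ne (by lia) (by lia)]

lemma IsAntisymmetric.map_prod_sub_mul_pow [IsAddTorsionFree M] {m : ℕ}
    {L : MvPolynomial ℕ A →ₗ[A] M} (hL : IsAntisymmetric L m) {y g : MvPolynomial ℕ A}
    (hy : ∀ i < m, rename (Equiv.swap i (i + 1)) y = y)
    (hg : ∀ i < m, rename (Equiv.swap i (i + 1)) g = g) :
    L ((∏ i ∈ Finset.range m, (X i - y) * X i ^ i) * X m ^ m * g) =
      ((-1) ^ m : A) • L (y ^ m * (∏ i ∈ Finset.range (m + 1), X i ^ i) * g) := by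
  induction m generalizing g with
  | zero => simp
  | succ m ih =>
    set P : MvPolynomial ℕ A := ∏ i ∈ Finset.range m, (X i - y) * X i ^ i with hP
    -- in the term of `X m` the variables `X m`, `X (m + 1)` have equal exponents
    have hsymm : L (P * (X m ^ (m + 1) * X (m + 1) ^ (m + 1)) * g) = 0 := by
      refine hL.eq_zero m.lt_succ_self ?_
      have hfix : rename (Equiv.swap m (m + 1)) P = P := by
        rw [hP, map_prod]
        refine Finset.prod_congr rfl fun i hi => ?_
        rw [map_mul, map_sub, map_pow, hy m m.lt_succ_self,
          rename_swap_X_of_gt (Finset.mem_range.mp hi)]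
      simp only [map_mul, map_pow, hfix, hg m m.lt_succ_self, rename_X, Equiv.swap_apply_left,
        Equiv.swap_apply_right, mul_comm]
    have hind := ih (hL.mono m.le_succ) (g := y * X (m + 1) ^ (m + 1) * g)
      (fun i hi => hy i (by lia)) fun i hi => by
        rw [map_mul, map_mul, map_pow, hy i (by lia), hg i (by lia),
          rename_swap_X_of_lt (by lia)]
    calc L ((∏ i ∈ Finset.range (m + 1), (X i - y) * X i ^ i) * X (m + 1) ^ (m + 1) * g)
        = L (P * (X m ^ (m + 1) * X (m + 1) ^ (m + 1)) * g -
            P * X m ^ m * (y * X (m + 1) ^ (m + 1) * g)) := by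
          rw [Finset.prod_range_succ]; congr 1; ring
      _ = -(((-1) ^ m : A) • L (y ^ m * (∏ i ∈ Finset.range (m + 1), X i ^ i) *
            (y * X (m + 1) ^ (m + 1) * g))) := by rw [map_sub, hsymm, hind, zero_sub]
      _ = ((-1) ^ (m + 1) : A) • L (y ^ (m + 1) * (∏ i ∈ Finset.range (m + 2), X i ^ i) * g) := by
          rw [Finset.prod_range_succ _ (m + 1), pow_succ (-1 : A), mul_neg_one, neg_smul]
          congr 3; ring

/-- This is where the quantum integers come from: splitting the last factor `X r - C t * X (r + 1)`,
the first term is the previous case with `X r` and `X (r + 1)` exchanged, and the second contributes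
`t ^ (r + 1)`. -/
lemma IsAntisymmetric.map_prod_sub_C_mul [IsAddTorsionFree M] {r : ℕ}
    {L : MvPolynomial ℕ A →ₗ[A] M} (hL : IsAntisymmetric L r) (t : A) :
    L (∏ i ∈ Finset.range r, (X i - C t * X r) * X i ^ i) =
      ((-1) ^ r * ∑ j ∈ Finset.range (r + 1), t ^ j) •
        L (∏ i ∈ Finset.range (r + 1), X i ^ i) := by
  induction r generalizing L with
  | zero => simp
  | succ r ih =>
    set V : MvPolynomial ℕ A := ∏ i ∈ Finset.range (r + 1), X i ^ i with hV
    set P : MvPolynomial ℕ A := ∏ i ∈ Finset.range r, (X i - C t * X (r + 1)) * X i ^ i with hP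
    have hfirst : L (P * X r ^ (r + 1)) =
        -(((-1) ^ r * ∑ j ∈ Finset.range (r + 1), t ^ j) • L (V * X (r + 1) ^ (r + 1))) := by
      have hind := ih ((hL.mono r.le_succ).comp_mulRight (g := X (r + 1) ^ (r + 1))
        fun i hi => by rw [map_pow, rename_swap_X_of_lt (by lia)])
      have hswap : P * X r ^ (r + 1) = rename (Equiv.swap r (r + 1))
          ((∏ i ∈ Finset.range r, (X i - C t * X r) * X i ^ i) * X (r + 1) ^ (r + 1)) := by
        rw [map_mul, map_prod, map_pow, rename_X, Equiv.swap_apply_right, hP]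
        congr 1
        refine Finset.prod_congr rfl fun i hi => ?_
        rw [map_mul, map_sub, map_pow, map_mul, rename_C,
          rename_swap_X_of_gt (Finset.mem_range.mp hi), rename_X, Equiv.swap_apply_left]
      rw [hswap, hL r r.lt_succ_self]
      exact congrArg Neg.neg hind
    have hsecond : L (P * X r ^ r * (C t * X (r + 1))) =
        ((-1) ^ r * t ^ (r + 1)) • L (V * X (r + 1) ^ (r + 1)) := by
      have hfix (i : ℕ) (hi : i < r) :
          rename (Equiv.swap i (i + 1)) (C t * X (r + 1) : MvPolynomial ℕ A) =
            C t * X (r + 1) := by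
        rw [map_mul, rename_C, rename_swap_X_of_lt (by lia)]
      rw [(hL.mono r.le_succ).map_prod_sub_mul_pow hfix hfix, mul_smul, ← map_smul L (t ^ (r + 1)),
        smul_eq_C_mul, C_pow]
      congr 2
      rw [hV, Finset.prod_range_succ]
      ring
    rw [Finset.prod_range_succ, Finset.prod_range_succ _ (r + 1), ← hP, ← hV,
      show P * ((X r - C t * X (r + 1)) * X r ^ r) =
        P * X r ^ (r + 1) - P * X r ^ r * (C t * X (r + 1)) by ring, map_sub, hfirst, hsecond,
      ← neg_smul, ← sub_smul, Finset.sum_range_succ _ (r + 1)]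
    congr 1
    ring

@[to_additive]
lemma prod_range_swap {N : Type*} [CommMonoid N] (f : ℕ → N) {i n : ℕ} (h : i + 1 < n) :
    ∏ a ∈ Finset.range n, f (Equiv.swap i (i + 1) a) = ∏ a ∈ Finset.range n, f a := by
  refine Finset.prod_equiv (Equiv.swap i (i + 1)) (fun a => ?_) fun _ _ => rfl
  simp only [Finset.mem_range, Equiv.swap_apply_def]
  split_ifs <;> lia

variable (A) in
/-- The Vandermonde product `∏_{i<j<r} (w_j - w_i)`, as an iterated product so that passing from `r`
to `r + 1` is `Finset.prod_range_succ`. -/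
def vandermondeProd (r : ℕ) : MvPolynomial ℕ A :=
  ∏ j ∈ Finset.range r, ∏ i ∈ Finset.range j, (X j - X i)

lemma vandermondeProd_succ (r : ℕ) :
    vandermondeProd A (r + 1) = vandermondeProd A r * ∏ i ∈ Finset.range r, (X r - X i) :=
  Finset.prod_range_succ _ _

lemma map_vandermondeProd_of_fixed {r : ℕ} (f : MvPolynomial ℕ A →+* MvPolynomial ℕ A)
    (hf : ∀ i < r, f (X i) = X i) : f (vandermondeProd A r) = vandermondeProd A r := by
  rw [vandermondeProd, map_prod]
  refine Finset.prod_congr rfl fun j hj => ?_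
  rw [map_prod]
  refine Finset.prod_congr rfl fun i hi => ?_
  rw [Finset.mem_range] at hi hj
  rw [map_sub, hf j hj, hf i (hi.trans hj)]

lemma rename_swap_vandermondeProd {i r : ℕ} (h : i + 1 < r) :
    rename (Equiv.swap i (i + 1)) (vandermondeProd A r) = -vandermondeProd A r := by
  obtain ⟨e, rfl⟩ := Nat.exists_eq_add_of_lt h
  clear h
  induction e with
  | zero =>
    have hprefix : rename (Equiv.swap i (i + 1)) (vandermondeProd A i) = vandermondeProd A i :=
      map_vandermondeProd_of_fixed (rename (Equiv.swap i (i + 1))).toRingHom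
        fun a ha => rename_swap_X_of_gt ha
    have hrow (k : ℕ) : rename (Equiv.swap i (i + 1)) (∏ a ∈ Finset.range i, (X k - X a)) =
        ∏ a ∈ Finset.range i, (X (Equiv.swap i (i + 1) k) - X a : MvPolynomial ℕ A) := by
      rw [map_prod]
      refine Finset.prod_congr rfl fun a ha => ?_
      rw [map_sub, rename_X, rename_swap_X_of_gt (Finset.mem_range.mp ha)]
    rw [add_zero, vandermondeProd_succ, vandermondeProd_succ, Finset.prod_range_succ, map_mul,
      map_mul, map_mul, hprefix, hrow, hrow, map_sub, rename_X, rename_X, Equiv.swap_apply_left,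
      Equiv.swap_apply_right]
    ring
  | succ e ih =>
    rw [show i + 1 + (e + 1) + 1 = i + 1 + e + 1 + 1 by lia, vandermondeProd_succ, map_mul, ih,
      map_prod]
    simp only [map_sub, rename_X]
    rw [Equiv.swap_apply_of_ne_of_ne (x := i + 1 + e + 1) (by lia) (by lia),
      prod_range_swap (fun a => X (i + 1 + e + 1) - X a) (by lia), neg_mul]

end Antisymmetric

/-! ### Iterated vertex operators -/

section ModeFunctional

variable {A σ : Type*} [CommRing A]

/-- The linear functional `w ^ j ↦ H (c + j)`: the pairing of a polynomial in `w` with the modes `H`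
of a generating series. -/
def modeFunctional (H : ℤ → A) (c : ℤ) : Polynomial A →ₗ[A] A :=
  (Polynomial.basisMonomials A).constr A fun j => H (c + j)

lemma modeFunctional_monomial (H : ℤ → A) (c : ℤ) (j : ℕ) (a : A) :
    modeFunctional H c (Polynomial.monomial j a) = a * H (c + j) := by
  have hbasis : modeFunctional H c (Polynomial.monomial j 1) = H (c + j) :=
    (Polynomial.basisMonomials A).constr_basis A (fun j => H (c + j)) j
  rw [← mul_one a, ← smul_eq_mul, ← Polynomial.smul_monomial, map_smul, hbasis, smul_eq_mul,
    smul_eq_mul, mul_one]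

lemma modeFunctional_eq_sum_range (H : ℤ → A) (c : ℤ) {f : Polynomial A} {N : ℕ}
    (hN : f.natDegree < N) :
    modeFunctional H c f = ∑ j ∈ Finset.range N, f.coeff j * H (c + j) := by
  conv_lhs => rw [f.as_sum_range' N hN]
  simp only [map_sum, modeFunctional_monomial]

lemma modeFunctional_C_mul (H : ℤ → A) (c : ℤ) (a : A) (f : Polynomial A) :
    modeFunctional H c (Polynomial.C a * f) = a * modeFunctional H c f := by
  rw [← Polynomial.smul_eq_C_mul, map_smul, smul_eq_mul]

/-- The linear functional `∏ w_i ^ k_i ↦ ∏_{i ∈ s} H (c + k_i)`. The exponents of the variables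
outside `s` are ignored, so these variables are in effect set to `1`. -/
def multiModeFunctional (H : ℤ → A) (c : ℤ) (s : Finset σ) : MvPolynomial σ A →ₗ[A] A :=
  (basisMonomials σ A).constr A fun k => ∏ i ∈ s, H (c + k i)

lemma multiModeFunctional_monomial (H : ℤ → A) (c : ℤ) (s : Finset σ) (k : σ →₀ ℕ) (a : A) :
    multiModeFunctional H c s (monomial k a) = a * ∏ i ∈ s, H (c + k i) := by
  have hbasis : multiModeFunctional H c s (monomial k 1) = ∏ i ∈ s, H (c + k i) :=
    (basisMonomials σ A).constr_basis A (fun k => ∏ i ∈ s, H (c + k i)) k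
  rw [← mul_one a, ← smul_eq_mul, ← smul_monomial, map_smul, hbasis, smul_eq_mul, smul_eq_mul,
    mul_one]

lemma multiModeFunctional_rename_swap (H : ℤ → A) (c : ℤ) {i n : ℕ} (h : i + 1 < n)
    (f : MvPolynomial ℕ A) :
    multiModeFunctional H c (Finset.range n) (rename (Equiv.swap i (i + 1)) f) =
      multiModeFunctional H c (Finset.range n) f := by
  induction f using MvPolynomial.induction_on' with
  | monomial k a =>
    rw [rename_monomial, multiModeFunctional_monomial, multiModeFunctional_monomial,
      ← Finsupp.equivMapDomain_eq_mapDomain]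
    simp only [Finsupp.equivMapDomain_apply, Equiv.symm_swap]
    rw [prod_range_swap (fun a => H (c + k a)) h]
  | add p q hp hq => rw [map_add, map_add, map_add, hp, hq]

lemma multiModeFunctional_monomial_mul_prod_subset [DecidableEq σ] (H : ℤ → A) (c : ℤ)
    {s u : Finset σ} (hu : u ⊆ s) (k : σ →₀ ℕ) (a : A) (g : σ → Polynomial A) :
    multiModeFunctional H c s (monomial k a * ∏ i ∈ u, Polynomial.aeval (X i) (g i)) =
      a * (∏ i ∈ u, modeFunctional H c (Polynomial.X ^ k i * g i)) *
        ∏ i ∈ s \ u, H (c + k i) := by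
  induction u using Finset.induction_on generalizing k a with
  | empty => simp [multiModeFunctional_monomial]
  | insert b u hb ih =>
    rw [Finset.insert_subset_iff] at hu
    rw [Finset.prod_insert hb, Finset.prod_insert hb]
    induction g b using Polynomial.induction_on' with
    | add p q hp hq => simp only [map_add, mul_add, add_mul, hp, hq]
    | monomial j x =>
      set k' := k + Finsupp.single b j with hk'
      have hk (i : σ) (hi : i ≠ b) : k' i = k i := by
        rw [hk', Finsupp.add_apply, Finsupp.single_eq_of_ne hi, add_zero]
      have hkb : k' b = k b + j := by rw [hk', Finsupp.add_apply, Finsupp.single_eq_same]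
      have hmono : monomial k a * (Polynomial.aeval (X b) (Polynomial.monomial j x) *
            ∏ i ∈ u, Polynomial.aeval (X i) (g i)) =
          monomial k' (a * x) * ∏ i ∈ u, Polynomial.aeval (X i) (g i) := by
        rw [← mul_assoc, Polynomial.aeval_monomial, algebraMap_eq, C_mul_X_pow_eq_monomial,
          monomial_mul]
      have hprod_in : ∏ i ∈ u, modeFunctional H c (Polynomial.X ^ k' i * g i) =
          ∏ i ∈ u, modeFunctional H c (Polynomial.X ^ k i * g i) :=
        Finset.prod_congr rfl fun i hi => by rw [hk i (ne_of_mem_of_not_mem hi hb)]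
      have hprod_out : ∏ i ∈ s \ u, H (c + k' i) =
          H (c + (k b + j : ℕ)) * ∏ i ∈ s \ insert b u, H (c + k i) := by
        rw [← Finset.mul_prod_erase _ _ (Finset.mem_sdiff.mpr ⟨hu.1, hb⟩), hkb, Finset.sdiff_insert]
        congr 1
        exact Finset.prod_congr rfl fun i hi => by rw [hk i (Finset.ne_of_mem_erase hi)]
      have hfactor : modeFunctional H c (Polynomial.X ^ k b * Polynomial.monomial j x) =
          x * H (c + (k b + j : ℕ)) := by
        rw [← Polynomial.monomial_one_right_eq_X_pow, Polynomial.monomial_mul_monomial,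
          modeFunctional_monomial, one_mul]
      rw [hmono, ih hu.2, hprod_in, hprod_out, hfactor]
      ring

lemma multiModeFunctional_monomial_mul_prod (H : ℤ → A) (c : ℤ) (s : Finset σ) (k : σ →₀ ℕ)
    (a : A) (g : σ → Polynomial A) :
    multiModeFunctional H c s (monomial k a * ∏ i ∈ s, Polynomial.aeval (X i) (g i)) =
      a * ∏ i ∈ s, modeFunctional H c (Polynomial.X ^ k i * g i) := by
  classical
  rw [multiModeFunctional_monomial_mul_prod_subset H c subset_rfl, Finset.sdiff_self,
    Finset.prod_empty, mul_one]

/-- The coefficient variable of a polynomial over `A[w]` is turned into the new variable `w_a`; the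
variables outside `s` are set to `1`, as `multiModeFunctional` does. -/
def adjoinVariable [DecidableEq σ] (s : Finset σ) (a : σ) :
    MvPolynomial σ (Polynomial A) →+* MvPolynomial σ A :=
  eval₂Hom (Polynomial.aeval (X a)).toRingHom fun i => if i ∈ s then X i else 1

lemma adjoinVariable_C [DecidableEq σ] (s : Finset σ) (a : σ) (f : Polynomial A) :
    adjoinVariable s a (C f) = Polynomial.aeval (X a) f :=
  eval₂Hom_C _ _ _

lemma adjoinVariable_X [DecidableEq σ] {s : Finset σ} (a : σ) {i : σ} (hi : i ∈ s) :
    adjoinVariable s a (X i : MvPolynomial σ (Polynomial A)) = X i :=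
  (eval₂Hom_X' _ _ _).trans (if_pos hi)

lemma modeFunctional_multiModeFunctional [DecidableEq σ] (H : ℤ → A) (c : ℤ) {s : Finset σ}
    {a : σ} (ha : a ∉ s) (G : MvPolynomial σ (Polynomial A)) :
    modeFunctional H c (multiModeFunctional (fun n => Polynomial.C (H n)) c s G) =
      multiModeFunctional H c (insert a s) (adjoinVariable s a G) := by
  induction G using MvPolynomial.induction_on' with
  | add p q hp hq => simp only [map_add, hp, hq]
  | monomial k f =>
    induction f using Polynomial.induction_on' with
    | add p q hp hq => simp only [map_add, hp, hq]
    | monomial j x =>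
      set k' := k.filter (· ∈ s) + Finsupp.single a j with hk'
      have hmono : adjoinVariable s a (monomial k (Polynomial.monomial j x)) = monomial k' x := by
        have hvars : (k.prod fun i e => (if i ∈ s then X i else 1 : MvPolynomial σ A) ^ e) =
            monomial (k.filter (· ∈ s)) 1 := by
          rw [monomial_eq, C_1, one_mul, Finsupp.prod_filter_index, Finsupp.support_filter,
            Finset.prod_filter]
          exact Finset.prod_congr rfl fun i _ => by split_ifs with h <;> simp [h]
        rw [adjoinVariable, coe_eval₂Hom, eval₂_monomial, hvars, AlgHom.toRingHom_eq_coe,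
          RingHom.coe_coe, Polynomial.aeval_monomial, algebraMap_eq, C_mul_X_pow_eq_monomial,
          monomial_mul, mul_one, add_comm, hk']
      have hprod : ∏ i ∈ s, H (c + k' i) = ∏ i ∈ s, H (c + k i) :=
        Finset.prod_congr rfl fun i hi => by
          rw [hk', Finsupp.add_apply, Finsupp.filter_apply_pos _ _ hi,
            Finsupp.single_eq_of_ne (ne_of_mem_of_not_mem hi ha), add_zero]
      have hka : k' a = j := by
        rw [hk', Finsupp.add_apply, Finsupp.filter_apply_neg _ _ ha, Finsupp.single_eq_same,
          zero_add]
      rw [hmono, multiModeFunctional_monomial, multiModeFunctional_monomial,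
        Finset.prod_insert ha, hka, hprod, ← map_prod, mul_comm, modeFunctional_C_mul,
        modeFunctional_monomial]
      ring

end ModeFunctional

section VertexOperator

variable {A : Type*} [CommRing A]

/-- The contraction relation `D (H(z)) = (1 - w z) (1 - t w z) H(z)` for the generating series
`H(z) = ∑ H n z ^ n`, where `w` is the polynomial variable, stated coefficientwise. -/
def HasQuadraticContraction (D : A →+* Polynomial A) (H : ℤ → A) (t : A) : Prop :=
  ∀ n, D (H n) = Polynomial.C (H n) -
    Polynomial.C (1 + t) * Polynomial.X * Polynomial.C (H (n - 1)) +
    Polynomial.C t * Polynomial.X ^ 2 * Polynomial.C (H (n - 2))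

lemma HasQuadraticContraction.map_eq_modeFunctional {D : A →+* Polynomial A} {H : ℤ → A} {t : A}
    (hH : HasQuadraticContraction D H t) (c : ℤ) (k : ℕ) :
    D (H (c + 2 + k)) = modeFunctional (fun n => Polynomial.C (H n)) c
      (Polynomial.X ^ k * ((Polynomial.X - Polynomial.C Polynomial.X) *
        (Polynomial.X - Polynomial.C (Polynomial.C t * Polynomial.X)))) := by
  have hexpand : (Polynomial.X ^ k * ((Polynomial.X - Polynomial.C Polynomial.X) *
        (Polynomial.X - Polynomial.C (Polynomial.C t * Polynomial.X))) :
          Polynomial (Polynomial A)) =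
      Polynomial.monomial (k + 2) 1 -
        Polynomial.monomial (k + 1) (Polynomial.C (1 + t) * Polynomial.X) +
        Polynomial.monomial k (Polynomial.C t * Polynomial.X ^ 2) := by
    simp only [← Polynomial.C_mul_X_pow_eq_monomial, map_mul, map_add, map_one, map_pow]
    ring
  rw [hexpand, map_add, map_sub, modeFunctional_monomial, modeFunctional_monomial,
    modeFunctional_monomial, hH, one_mul]
  congr 4 <;> push_cast <;> ring_nf

lemma HasQuadraticContraction.map_multiModeFunctional {σ : Type*} {D : A →+* Polynomial A}
    {H : ℤ → A} {t : A} (hH : HasQuadraticContraction D H t) (c : ℤ) (s : Finset σ)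
    (F : MvPolynomial σ A) :
    D (multiModeFunctional H (c + 2) s F) =
      multiModeFunctional (fun n => Polynomial.C (H n)) c s (MvPolynomial.map D F *
        ∏ i ∈ s, ((X i - C Polynomial.X) * (X i - C (Polynomial.C t * Polynomial.X)))) := by
  induction F using MvPolynomial.induction_on' with
  | add p q hp hq => simp only [map_add, add_mul, hp, hq]
  | monomial k a =>
    have hfactor (i : σ) : ((X i - C Polynomial.X) * (X i - C (Polynomial.C t * Polynomial.X)) :
          MvPolynomial σ (Polynomial A)) =
        Polynomial.aeval (X i) ((Polynomial.X - Polynomial.C Polynomial.X) *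
          (Polynomial.X - Polynomial.C (Polynomial.C t * Polynomial.X))) := by
      simp only [map_mul, map_sub, Polynomial.aeval_X, Polynomial.aeval_C, algebraMap_eq]
    rw [multiModeFunctional_monomial, map_mul, map_prod, map_monomial]
    simp only [hfactor, multiModeFunctional_monomial_mul_prod, hH.map_eq_modeFunctional]

/-- The extension of `D` to polynomials in the variables `w_i`, `i ∈ s`, fixing these variables and
calling `w_a` the variable that `D` introduces. -/
def extendHom {σ : Type*} [DecidableEq σ] (D : A →+* Polynomial A) (s : Finset σ) (a : σ) :
    MvPolynomial σ A →+* MvPolynomial σ A :=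
  (adjoinVariable s a).comp (MvPolynomial.map D)

lemma extendHom_C {σ : Type*} [DecidableEq σ] (D : A →+* Polynomial A) (s : Finset σ) (a : σ)
    (x : A) : extendHom D s a (C x) = Polynomial.aeval (X a) (D x) := by
  rw [extendHom, RingHom.comp_apply, map_C, adjoinVariable_C]

lemma extendHom_X {σ : Type*} [DecidableEq σ] (D : A →+* Polynomial A) {s : Finset σ} (a : σ)
    {i : σ} (hi : i ∈ s) : extendHom D s a (X i) = X i := by
  rw [extendHom, RingHom.comp_apply, map_X, adjoinVariable_X a hi]

lemma HasQuadraticContraction.modeFunctional_map_multiModeFunctional {σ : Type*} [DecidableEq σ]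
    {D : A →+* Polynomial A} {H : ℤ → A} {t : A} (hH : HasQuadraticContraction D H t) (c : ℤ)
    {s : Finset σ} {a : σ} (ha : a ∉ s) (F : MvPolynomial σ A) :
    modeFunctional H c (D (multiModeFunctional H (c + 2) s F)) =
      multiModeFunctional H c (insert a s)
        ((∏ i ∈ s, ((X i - X a) * (X i - C t * X a))) * extendHom D s a F) := by
  have hprod : adjoinVariable s a
        (∏ i ∈ s, ((X i - C Polynomial.X) * (X i - C (Polynomial.C t * Polynomial.X)))) =
      ∏ i ∈ s, ((X i - X a) * (X i - C t * X a)) := by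
    rw [map_prod]
    refine Finset.prod_congr rfl fun i hi => ?_
    simp only [map_mul, map_sub, adjoinVariable_X a hi, adjoinVariable_C, Polynomial.aeval_X,
      Polynomial.aeval_C, algebraMap_eq]
  rw [hH.map_multiModeFunctional, modeFunctional_multiModeFunctional H c ha, map_mul, hprod,
    mul_comm, extendHom, RingHom.comp_apply]

/-- The result of applying `P ↦ modeFunctional H c (D P)`, then the same operator with `c - 2`, and
so on, `r` times in all. -/
def iterVertex (H : ℤ → A) (D : A →+* Polynomial A) (c : ℤ) (P : A) : ℕ → A
  | 0 => P
  | r + 1 => modeFunctional H (c - 2 * r) (D (iterVertex H D c P r))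

/-- The `r`-fold application of `D`, the variable introduced by the `i`-th application being called
`w_i`. -/
def iterSubst (D : A →+* Polynomial A) : ℕ → A →+* MvPolynomial ℕ A
  | 0 => C
  | r + 1 => (extendHom D (Finset.range r) r).comp (iterSubst D r)

/-- The Gaussian factorial `∏_{k=1}^r (1 + t + ⋯ + t^{k-1})`. -/
def gaussFactorial (t : A) (r : ℕ) : A :=
  ∏ k ∈ Finset.range r, ∑ j ∈ Finset.range (k + 1), t ^ j

lemma isAntisymmetric_multiModeFunctional_vandermondeProd (H : ℤ → A) (c : ℤ) (r : ℕ)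
    {g : MvPolynomial ℕ A} (hg : ∀ i < r, rename (Equiv.swap i (i + 1)) g = g) :
    IsAntisymmetric (multiModeFunctional H c (Finset.range (r + 1)) ∘ₗ
      LinearMap.mulRight A (vandermondeProd A (r + 1) * g)) r := fun i hi f => by
  have hi' : i + 1 < r + 1 := Nat.succ_lt_succ hi
  have hswap : rename (Equiv.swap i (i + 1)) (f * (vandermondeProd A (r + 1) * g)) =
      -(rename (Equiv.swap i (i + 1)) f * (vandermondeProd A (r + 1) * g)) := by
    rw [map_mul, map_mul, rename_swap_vandermondeProd hi', hg i hi, neg_mul, mul_neg]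
  simp only [LinearMap.comp_apply, LinearMap.mulRight_apply]
  rw [← multiModeFunctional_rename_swap H c hi' (f * _), hswap, map_neg, neg_neg]

lemma prod_contraction_mul_vandermondeProd (t : A) (r : ℕ) (g : MvPolynomial ℕ A) :
    (∏ i ∈ Finset.range r, ((X i - X r) * (X i - C t * X r))) *
        ((∏ i ∈ Finset.range r, X i ^ i) * (vandermondeProd A r * g)) =
      C ((-1) ^ r) * ((∏ i ∈ Finset.range r, (X i - C t * X r) * X i ^ i) *
        (vandermondeProd A (r + 1) * g)) := by
  have hneg : ∏ i ∈ Finset.range r, (X i - X r : MvPolynomial ℕ A) =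
      (-1) ^ r * ∏ i ∈ Finset.range r, (X r - X i) := by
    rw [Finset.prod_congr rfl fun i _ => show (X i - X r : MvPolynomial ℕ A) =
      -1 * (X r - X i) by ring, Finset.prod_mul_distrib, Finset.prod_const, Finset.card_range]
  rw [vandermondeProd_succ, Finset.prod_mul_distrib, Finset.prod_mul_distrib, hneg, map_pow,
    map_neg, map_one]
  ring

theorem iterVertex_eq_gaussFactorial_mul [IsAddTorsionFree A] {D : A →+* Polynomial A} {H : ℤ → A}
    {t : A} (hH : HasQuadraticContraction D H t) (ht : D t = Polynomial.C t)
    (hsymm : ∀ r i P, i + 1 < r →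
      rename (Equiv.swap i (i + 1)) (iterSubst D r P) = iterSubst D r P)
    (c : ℤ) (P : A) (r : ℕ) :
    iterVertex H D c P r = gaussFactorial t r *
      multiModeFunctional H (c + 2 - 2 * r) (Finset.range r)
        ((∏ i ∈ Finset.range r, X i ^ i) * (vandermondeProd A r * iterSubst D r P)) := by
  induction r with
  | zero =>
    simp only [iterVertex, gaussFactorial, vandermondeProd, iterSubst, Finset.range_zero,
      Finset.prod_empty, one_mul, ← monomial_zero', multiModeFunctional_monomial, mul_one]
  | succ r ih =>
    set Q := iterSubst D (r + 1) P with hQ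
    have hfac : D (gaussFactorial t r) = Polynomial.C (gaussFactorial t r) := by
      simp only [gaussFactorial, map_prod, map_sum, map_pow, ht]
    have hext : extendHom D (Finset.range r) r
          ((∏ i ∈ Finset.range r, X i ^ i) * (vandermondeProd A r * iterSubst D r P)) =
        (∏ i ∈ Finset.range r, X i ^ i) * (vandermondeProd A r * Q) := by
      have hX (i : ℕ) (hi : i ∈ Finset.range r) : extendHom D (Finset.range r) r (X i) = X i :=
        extendHom_X D r hi
      rw [map_mul, map_mul, map_prod,
        map_vandermondeProd_of_fixed _ fun i hi => hX i (Finset.mem_range.mpr hi),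
        Finset.prod_congr rfl fun i hi => by rw [map_pow, hX i hi]]
      rfl
    have hanti := (isAntisymmetric_multiModeFunctional_vandermondeProd H (c - 2 * r) r
      fun i hi => hsymm (r + 1) i P (Nat.succ_lt_succ hi)).map_prod_sub_C_mul t
    simp only [LinearMap.comp_apply, LinearMap.mulRight_apply, ← hQ] at hanti
    rw [iterVertex, ih, map_mul, hfac, modeFunctional_C_mul,
      show c + 2 - 2 * (r : ℤ) = c - 2 * r + 2 by ring,
      hH.modeFunctional_map_multiModeFunctional (c - 2 * r) Finset.notMem_range_self, hext,
      prod_contraction_mul_vandermondeProd, ← Finset.range_add_one, ← smul_eq_C_mul, map_smul,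
      hanti, smul_smul, ← mul_assoc, ← mul_pow, neg_one_mul, neg_neg, one_pow, one_mul,
      smul_eq_mul, ← mul_assoc, gaussFactorial, gaussFactorial, ← Finset.prod_range_succ,
      show c + 2 - 2 * ((r + 1 : ℕ) : ℤ) = c - 2 * r by push_cast; ring]

end VertexOperator

section Integrality

variable {A : Type*} [CommRing A] {S : Subring A}

lemma multiModeFunctional_mem {σ : Type*} {H : ℤ → A} (hH : ∀ n, H n ∈ S) (c : ℤ) (s : Finset σ)
    {F : MvPolynomial σ A} (hF : F ∈ (MvPolynomial.map S.subtype).range) :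
    multiModeFunctional H c s F ∈ S := by
  obtain ⟨G, rfl⟩ := hF
  induction G using MvPolynomial.induction_on' with
  | monomial k a =>
    rw [map_monomial, multiModeFunctional_monomial]
    exact mul_mem a.2 (prod_mem fun i _ => hH _)
  | add p q hp hq => rw [map_add, map_add]; exact add_mem hp hq

lemma X_mem_range_map {σ : Type*} (i : σ) : X i ∈ (MvPolynomial.map (σ := σ) S.subtype).range :=
  ⟨X i, map_X _ _⟩

lemma vandermondeProd_mem (r : ℕ) : vandermondeProd A r ∈ (MvPolynomial.map S.subtype).range :=
  prod_mem fun _ _ => prod_mem fun _ _ => sub_mem (X_mem_range_map _) (X_mem_range_map _)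

lemma extendHom_mem {σ : Type*} [DecidableEq σ] {D : A →+* Polynomial A}
    (hD : ∀ x ∈ S, D x ∈ (Polynomial.mapRingHom S.subtype).range) (s : Finset σ) (a : σ)
    {F : MvPolynomial σ A} (hF : F ∈ (MvPolynomial.map S.subtype).range) :
    extendHom D s a F ∈ (MvPolynomial.map S.subtype).range := by
  obtain ⟨G, rfl⟩ := hF
  induction G using MvPolynomial.induction_on with
  | C x =>
    obtain ⟨f, hf⟩ := hD x x.2
    refine ⟨Polynomial.aeval (X a) f, ?_⟩
    rw [map_C, extendHom_C, Subring.subtype_apply, ← hf, Polynomial.coe_mapRingHom,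
      Polynomial.aeval_def, Polynomial.aeval_def, Polynomial.hom_eval₂, Polynomial.eval₂_map, map_X]
    congr 1
    exact RingHom.ext fun y => map_C _ _
  | add p q hp hq => rw [map_add, map_add]; exact add_mem hp hq
  | mul_X p i hp =>
    rw [map_mul, map_mul, map_X]
    refine mul_mem hp ?_
    rw [extendHom, RingHom.comp_apply, map_X, adjoinVariable, eval₂Hom_X']
    split_ifs
    exacts [X_mem_range_map i, one_mem _]

lemma iterSubst_mem {D : A →+* Polynomial A}
    (hD : ∀ x ∈ S, D x ∈ (Polynomial.mapRingHom S.subtype).range) (r : ℕ) {P : A} (hP : P ∈ S) :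
    iterSubst D r P ∈ (MvPolynomial.map S.subtype).range := by
  induction r with
  | zero => exact ⟨C ⟨P, hP⟩, map_C _ _⟩
  | succ r ih => exact extendHom_mem hD _ _ ih

theorem exists_mem_iterVertex_eq_gaussFactorial_mul [IsAddTorsionFree A] {D : A →+* Polynomial A}
    {H : ℤ → A} {t : A} (hcontr : HasQuadraticContraction D H t) (ht : D t = Polynomial.C t)
    (hsymm : ∀ r i P, i + 1 < r →
      rename (Equiv.swap i (i + 1)) (iterSubst D r P) = iterSubst D r P)
    (hH : ∀ n, H n ∈ S) (hD : ∀ x ∈ S, D x ∈ (Polynomial.mapRingHom S.subtype).range)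
    (c : ℤ) {P : A} (hP : P ∈ S) (r : ℕ) :
    ∃ Q ∈ S, iterVertex H D c P r = gaussFactorial t r * Q :=
  ⟨_, multiModeFunctional_mem hH _ _ <|
      mul_mem (prod_mem fun _ _ => pow_mem (X_mem_range_map _) _) <|
        mul_mem (vandermondeProd_mem r) (iterSubst_mem hD r hP),
    iterVertex_eq_gaussFactorial_mul hcontr ht hsymm c P r⟩

end Integrality

/-! ### Power series and their logarithmic derivatives -/

section LogarithmicDerivative

variable {B B' : Type*} [CommRing B] [CommRing B']

/-- The power series `F` has logarithmic derivative `b`, in the division-free form `F' = b F`. -/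
def HasLogDeriv (F b : PowerSeries B) : Prop :=
  PowerSeries.derivative B F = b * F

lemma HasLogDeriv.mul {F G b b' : PowerSeries B} (hF : HasLogDeriv F b) (hG : HasLogDeriv G b') :
    HasLogDeriv (F * G) (b + b') := by
  rw [HasLogDeriv, Derivation.leibniz, hF, hG, smul_eq_mul, smul_eq_mul]
  ring

lemma HasLogDeriv.map {F b : PowerSeries B} (hF : HasLogDeriv F b) (f : B →+* B') :
    HasLogDeriv (PowerSeries.map f F) (PowerSeries.map f b) := by
  rw [HasLogDeriv, ← map_mul, ← hF]
  ext n
  simp only [PowerSeries.coeff_derivative, PowerSeries.coeff_map, map_mul, map_add, map_natCast,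
    map_one]

lemma HasLogDeriv.of_mul_eq_one {F G b : PowerSeries B} (hF : HasLogDeriv F b) (h : F * G = 1) :
    HasLogDeriv G (-b) := by
  have hderiv : F * PowerSeries.derivative B G = -b := by
    have h' := congrArg (PowerSeries.derivative B) h
    rw [Derivation.leibniz, hF, Derivation.map_one_eq_zero, smul_eq_mul, smul_eq_mul,
      mul_left_comm, mul_comm G F, h, mul_one] at h'
    exact eq_neg_of_add_eq_zero_left h'
  rw [HasLogDeriv, ← hderiv, mul_right_comm, h, one_mul]

lemma HasLogDeriv.eq_zero [IsAddTorsionFree B] {F b : PowerSeries B} (hF : HasLogDeriv F b)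
    (h0 : PowerSeries.constantCoeff F = 0) : F = 0 := by
  ext n
  induction n using Nat.strong_induction_on with
  | _ n ih =>
    rcases n with _ | n
    · rw [PowerSeries.coeff_zero_eq_constantCoeff_apply, h0, map_zero]
    · have hcoeff := congrArg (PowerSeries.coeff n) hF
      rw [PowerSeries.coeff_derivative, PowerSeries.coeff_mul, Finset.sum_eq_zero] at hcoeff
      · rw [← Nat.cast_succ, mul_comm, ← nsmul_eq_mul] at hcoeff
        rw [map_zero]
        exact (nsmul_eq_zero_iff_right n.succ_ne_zero).mp hcoeff
      · intro p hp
        rw [ih p.2 (by rw [Finset.HasAntidiagonal.mem_antidiagonal] at hp; lia), map_zero, mul_zero]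

lemma HasLogDeriv.unique [IsAddTorsionFree B] {F G b : PowerSeries B} (hF : HasLogDeriv F b)
    (hG : HasLogDeriv G b)
    (h0 : PowerSeries.constantCoeff F = PowerSeries.constantCoeff G) : F = G :=
  sub_eq_zero.mp <| HasLogDeriv.eq_zero (b := b)
    (by rw [HasLogDeriv, map_sub, hF, hG, mul_sub]) (by rw [map_sub, h0, sub_self])

/-- For `F = exp β`, this is `D F = (D β) F`; the series `U` plays the role of `D β`. -/
lemma HasLogDeriv.mk_derivation_eq_mul {R : Type*} [CommRing R] [Algebra R B]
    [IsAddTorsionFree B] {F b U : PowerSeries B} (hF : HasLogDeriv F b) (D : Derivation R B B)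
    (hU : PowerSeries.derivative B U = PowerSeries.mk fun n => D (PowerSeries.coeff n b))
    (hU0 : PowerSeries.constantCoeff U = 0) (hF0 : D (PowerSeries.constantCoeff F) = 0) :
    PowerSeries.mk (fun n => D (PowerSeries.coeff n F)) = U * F := by
  have hDF : PowerSeries.derivative B (PowerSeries.mk fun n => D (PowerSeries.coeff n F)) =
      b * PowerSeries.mk (fun n => D (PowerSeries.coeff n F)) + PowerSeries.derivative B U * F := by
    ext n
    have hcoeff := congrArg (fun G => D (PowerSeries.coeff n G)) hF
    rw [PowerSeries.coeff_derivative, PowerSeries.coeff_mul, map_sum] at hcoeff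
    rw [hU, map_add, PowerSeries.coeff_derivative, PowerSeries.coeff_mk, PowerSeries.coeff_mul,
      PowerSeries.coeff_mul, ← Finset.sum_add_distrib]
    rw [← Nat.cast_succ, Derivation.leibniz, Derivation.map_natCast, smul_zero, zero_add,
      smul_eq_mul, mul_comm, Nat.cast_succ] at hcoeff
    refine hcoeff.trans (Finset.sum_congr rfl fun p _ => ?_)
    rw [Derivation.leibniz, smul_eq_mul, smul_eq_mul, PowerSeries.coeff_mk, PowerSeries.coeff_mk]
    ring
  refine sub_eq_zero.mp (HasLogDeriv.eq_zero (b := b) ?_ ?_)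
  · rw [HasLogDeriv, map_sub, hDF, Derivation.leibniz, hF, smul_eq_mul, smul_eq_mul]
    ring
  · rw [map_sub, map_mul, hU0, zero_mul, sub_zero, ← PowerSeries.coeff_zero_eq_constantCoeff_apply,
      PowerSeries.coeff_mk, PowerSeries.coeff_zero_eq_constantCoeff_apply, hF0]

/-- The linear power series `1 - a z`. -/
def linearSeries (a : B) : PowerSeries B :=
  1 - PowerSeries.C a * PowerSeries.X

lemma constantCoeff_linearSeries (a : B) : PowerSeries.constantCoeff (linearSeries a) = 1 := by
  simp [linearSeries]

lemma mk_pow_mul_linearSeries (a : B) : PowerSeries.mk (a ^ ·) * linearSeries a = 1 := by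
  ext n
  rw [linearSeries, mul_sub, mul_one, mul_left_comm, map_sub, PowerSeries.coeff_C_mul]
  rcases n with _ | n
  · simp
  · rw [PowerSeries.coeff_succ_mul_X, PowerSeries.coeff_mk, PowerSeries.coeff_mk,
      PowerSeries.coeff_one, if_neg n.succ_ne_zero]
    ring

lemma hasLogDeriv_linearSeries (a : B) :
    HasLogDeriv (linearSeries a) (PowerSeries.mk fun n => -a ^ (n + 1)) := by
  have hseries : PowerSeries.mk (fun n => -a ^ (n + 1)) =
      PowerSeries.C (-a) * PowerSeries.mk (a ^ ·) := by
    ext n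
    rw [PowerSeries.coeff_C_mul, PowerSeries.coeff_mk, PowerSeries.coeff_mk]
    ring
  rw [HasLogDeriv, hseries, mul_assoc, mk_pow_mul_linearSeries, linearSeries]
  simp

lemma hasLogDeriv_mk_pow (a : B) :
    HasLogDeriv (PowerSeries.mk (a ^ ·)) (PowerSeries.mk fun n => a ^ (n + 1)) := by
  convert (hasLogDeriv_linearSeries a).of_mul_eq_one
    ((mul_comm _ _).trans (mk_pow_mul_linearSeries a)) using 1
  ext n
  rw [map_neg, PowerSeries.coeff_mk, PowerSeries.coeff_mk, neg_neg]

/-- The coefficient of `z ^ n` for an integer `n`, zero for negative `n`. -/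
def intCoeff (F : PowerSeries B) (n : ℤ) : B :=
  if 0 ≤ n then PowerSeries.coeff n.toNat F else 0

lemma map_intCoeff (f : B →+* B') (F : PowerSeries B) (n : ℤ) :
    f (intCoeff F n) = intCoeff (PowerSeries.map f F) n := by
  rw [intCoeff, intCoeff, PowerSeries.coeff_map, apply_ite f, map_zero]

lemma intCoeff_mul_linearSeries (F : PowerSeries B) (a : B) (n : ℤ) :
    intCoeff (F * linearSeries a) n = intCoeff F n - a * intCoeff F (n - 1) := by
  have hcoeff (m : ℕ) : PowerSeries.coeff m (F * linearSeries a) =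
      PowerSeries.coeff m F - a * PowerSeries.coeff m (F * PowerSeries.X) := by
    rw [linearSeries, mul_sub, mul_one, mul_left_comm, map_sub, PowerSeries.coeff_C_mul]
  rcases lt_trichotomy n 0 with hn | rfl | hn
  · rw [intCoeff, intCoeff, intCoeff, if_neg hn.not_ge, if_neg hn.not_ge, if_neg (by lia), mul_zero,
      sub_zero]
  · simp [intCoeff, hcoeff]
  · obtain ⟨m, rfl⟩ : ∃ m : ℕ, n = (m + 1 : ℕ) := ⟨(n - 1).toNat, by lia⟩
    have hpred : ((m + 1 : ℕ) : ℤ) - 1 = m := by push_cast; ring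
    simp only [intCoeff, hpred, Int.natCast_nonneg, if_true, Int.toNat_natCast, hcoeff,
      PowerSeries.coeff_succ_mul_X]

lemma hasQuadraticContraction_intCoeff {D : B →+* Polynomial B} {F : PowerSeries B} {t : B}
    (h : PowerSeries.map D F = PowerSeries.map Polynomial.C F *
      (linearSeries Polynomial.X * linearSeries (Polynomial.C t * Polynomial.X))) :
    HasQuadraticContraction D (intCoeff F) t := fun n => by
  rw [map_intCoeff, h, ← mul_assoc, intCoeff_mul_linearSeries, intCoeff_mul_linearSeries,
    intCoeff_mul_linearSeries, ← map_intCoeff, ← map_intCoeff, ← map_intCoeff,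
    show n - 1 - 1 = n - 2 by ring, map_add, map_one]
  ring

lemma mem_range_map_subtype_iff {S : Subring B} {F : PowerSeries B} :
    F ∈ (PowerSeries.map S.subtype).range ↔ ∀ n, PowerSeries.coeff n F ∈ S := by
  refine ⟨?_, fun h => ⟨PowerSeries.mk fun n => ⟨_, h n⟩, ?_⟩⟩
  · rintro ⟨G, rfl⟩ n
    rw [PowerSeries.coeff_map]
    exact (PowerSeries.coeff n G).2
  · ext n
    rw [PowerSeries.coeff_map, PowerSeries.coeff_mk, Subring.subtype_apply]

lemma intCoeff_mem_of_mem_range {S : Subring B} {F : PowerSeries B}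
    (hF : F ∈ (PowerSeries.map S.subtype).range) (n : ℤ) : intCoeff F n ∈ S := by
  rw [intCoeff]
  split_ifs
  exacts [mem_range_map_subtype_iff.mp hF _, zero_mem S]

lemma mem_range_map_subtype_of_mul_eq_one {S : Subring B} {F G : PowerSeries B}
    (hF : F ∈ (PowerSeries.map S.subtype).range) (h0 : PowerSeries.constantCoeff F = 1)
    (h : F * G = 1) : G ∈ (PowerSeries.map S.subtype).range := by
  obtain ⟨F, rfl⟩ := hF
  have hunit : PowerSeries.constantCoeff F = ((1 : Sˣ) : S) := Subtype.val_injective <| by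
    rwa [← PowerSeries.coeff_zero_eq_constantCoeff_apply, PowerSeries.coeff_map,
      PowerSeries.coeff_zero_eq_constantCoeff_apply] at h0
  have hinv := congrArg (PowerSeries.map S.subtype) (PowerSeries.mul_invOfUnit F 1 hunit)
  rw [map_mul, map_one] at hinv
  exact ⟨_, (left_inv_eq_right_inv ((mul_comm _ _).trans hinv) h)⟩

end LogarithmicDerivative

/-! ### Generating families and shifts of the power sums -/

section GeneratingSeries

lemma genFamF_zero (c : ℕ → Fq) : genFamF c 0 = 1 := by
  rw [genFamF]

lemma natCast_succ_smul_genFamF_succ (c : ℕ → Fq) (k : ℕ) :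
    ((k : Fq) + 1) • genFamF c (k + 1) = ∑ i ∈ Finset.range (k + 1),
      c (i + 1) • (ppF ⟨i + 1, Nat.succ_pos i⟩ * genFamF c (k - i)) := by
  rw [genFamF, smul_inv_smul₀ (Nat.cast_add_one_ne_zero k)]

/-- The generating series `∑ genFamF c k z^k`, that is, `exp (∑ c_n p_n z^n / n)`. -/
def genSeries (c : ℕ → Fq) : PowerSeries LamF :=
  PowerSeries.mk (genFamF c)

/-- The power series `∑ c_{n+1} p_{n+1} z^n`, the logarithmic derivative of `genSeries c`. -/
def powerSumSeries (c : ℕ → Fq) : PowerSeries LamF :=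
  PowerSeries.mk fun n => C (c (n + 1)) * X (Nat.succPNat n)

lemma hasLogDeriv_genSeries (c : ℕ → Fq) : HasLogDeriv (genSeries c) (powerSumSeries c) := by
  ext1 n
  rw [PowerSeries.coeff_derivative, PowerSeries.coeff_mul,
    Finset.Nat.sum_antidiagonal_eq_sum_range_succ_mk, genSeries, PowerSeries.coeff_mk]
  have hrec := natCast_succ_smul_genFamF_succ c n
  rw [smul_eq_C_mul, map_add, map_natCast, map_one, mul_comm] at hrec
  rw [hrec]
  refine Finset.sum_congr rfl fun i _ => ?_
  rw [PowerSeries.coeff_mk, powerSumSeries, PowerSeries.coeff_mk, smul_eq_C_mul, ← mul_assoc]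
  rfl

lemma constantCoeff_genSeries (c : ℕ → Fq) : PowerSeries.constantCoeff (genSeries c) = 1 := by
  rw [genSeries, ← PowerSeries.coeff_zero_eq_constantCoeff_apply, PowerSeries.coeff_mk,
    genFamF_zero]

lemma genSeries_zero : genSeries 0 = 1 := by
  refine (hasLogDeriv_genSeries 0).unique ?_ ?_
  · have hseries : powerSumSeries 0 = 0 := by
      ext1 n
      simp [powerSumSeries]
    rw [HasLogDeriv, hseries, zero_mul, Derivation.map_one_eq_zero]
  · rw [constantCoeff_genSeries, map_one]

lemma genSeries_add (c c' : ℕ → Fq) : genSeries (c + c') = genSeries c * genSeries c' := by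
  refine (hasLogDeriv_genSeries (c + c')).unique ?_ ?_
  · convert (hasLogDeriv_genSeries c).mul (hasLogDeriv_genSeries c')
    ext1 n
    simp only [powerSumSeries, map_add, PowerSeries.coeff_mk, Pi.add_apply, add_mul]
  · rw [map_mul, constantCoeff_genSeries, constantCoeff_genSeries, constantCoeff_genSeries, mul_one]

lemma genFamF_pow_mul (c : ℕ → Fq) (a : Fq) (n : ℕ) :
    genFamF (fun n => a ^ n * c n) n = C a ^ n * genFamF c n := by
  have hrescale : genSeries (fun n => a ^ n * c n) =
      PowerSeries.rescale (C a) (genSeries c) := by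
    refine (hasLogDeriv_genSeries _).unique ?_ ?_
    · ext1 n
      have hcoeff := congrArg (fun s => C a ^ (n + 1) * PowerSeries.coeff n s)
        (hasLogDeriv_genSeries c)
      simp only [PowerSeries.coeff_derivative, PowerSeries.coeff_mul, Finset.mul_sum,
        PowerSeries.coeff_rescale, ← mul_assoc, powerSumSeries, PowerSeries.coeff_mk] at hcoeff ⊢
      rw [hcoeff]
      refine Finset.sum_congr rfl fun p hp => ?_
      rw [← Finset.HasAntidiagonal.mem_antidiagonal.mp hp, map_mul, C_pow]
      ring
    · rw [← PowerSeries.coeff_zero_eq_constantCoeff_apply,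
        ← PowerSeries.coeff_zero_eq_constantCoeff_apply, PowerSeries.coeff_rescale, pow_zero,
        one_mul, PowerSeries.coeff_zero_eq_constantCoeff_apply,
        PowerSeries.coeff_zero_eq_constantCoeff_apply, constantCoeff_genSeries,
        constantCoeff_genSeries]
  simpa only [genSeries, PowerSeries.coeff_mk, PowerSeries.coeff_rescale] using
    congrArg (PowerSeries.coeff n) hrescale

/-- The substitution `p_n ↦ p_n + d_n w^n`, the effect of an annihilation exponential. -/
def powerSumShift (d : ℕ → Fq) : LamF →+* Polynomial LamF :=
  eval₂Hom (Polynomial.C.comp C) fun n =>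
    Polynomial.C (X n) + Polynomial.C (C (d n)) * Polynomial.X ^ (n : ℕ)

lemma powerSumShift_C (d : ℕ → Fq) (a : Fq) : powerSumShift d (C a) = Polynomial.C (C a) :=
  eval₂Hom_C _ _ _

lemma powerSumShift_X (d : ℕ → Fq) (n : ℕ+) :
    powerSumShift d (X n) =
      Polynomial.C (X n) + Polynomial.C (C (d n)) * Polynomial.X ^ (n : ℕ) :=
  eval₂Hom_X' _ _ _

lemma iterSubst_powerSumShift_C (d : ℕ → Fq) (r : ℕ) (a : Fq) :
    iterSubst (powerSumShift d) r (C a) = C (C a) := by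
  induction r with
  | zero => rfl
  | succ r ih =>
    rw [iterSubst, RingHom.comp_apply, ih, extendHom_C, powerSumShift_C, Polynomial.aeval_C]
    rfl

lemma iterSubst_powerSumShift_X (d : ℕ → Fq) (r : ℕ) (n : ℕ+) :
    iterSubst (powerSumShift d) r (X n) =
      C (X n) + C (C (d n)) * ∑ i ∈ Finset.range r, X i ^ (n : ℕ) := by
  induction r with
  | zero => simp [iterSubst]
  | succ r ih =>
    rw [iterSubst, RingHom.comp_apply, ih, map_add, map_mul, extendHom_C, extendHom_C, map_sum,
      powerSumShift_X, powerSumShift_C, Finset.sum_range_succ]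
    have hfix : ∑ i ∈ Finset.range r, extendHom (powerSumShift d) (Finset.range r) r
        (X i ^ (n : ℕ)) = ∑ i ∈ Finset.range r, X i ^ (n : ℕ) :=
      Finset.sum_congr rfl fun i hi => by rw [map_pow, extendHom_X _ _ hi]
    rw [hfix]
    simp only [map_add, map_mul, map_pow, Polynomial.aeval_C, Polynomial.aeval_X,
      MvPolynomial.algebraMap_eq]
    ring

lemma rename_swap_iterSubst_powerSumShift (d : ℕ → Fq) {r i : ℕ} (h : i + 1 < r) (P : LamF) :
    rename (Equiv.swap i (i + 1)) (iterSubst (powerSumShift d) r P) =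
      iterSubst (powerSumShift d) r P := by
  suffices ((rename (Equiv.swap i (i + 1))).toRingHom.comp (iterSubst (powerSumShift d) r)) =
      iterSubst (powerSumShift d) r from RingHom.congr_fun this P
  refine MvPolynomial.ringHom_ext (fun a => ?_) fun n => ?_
  · simp only [RingHom.comp_apply, iterSubst_powerSumShift_C, AlgHom.toRingHom_eq_coe,
      RingHom.coe_coe, rename_C]
  · simp only [RingHom.comp_apply, iterSubst_powerSumShift_X, AlgHom.toRingHom_eq_coe,
      RingHom.coe_coe, map_add, map_mul, map_sum, map_pow, rename_C, rename_X]
    rw [sum_range_swap (fun i => X i ^ (n : ℕ)) h]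

/-- The operator product expansion of the annihilation and creation parts, with factor `E`. -/
lemma map_powerSumShift_genSeries (c d : ℕ → Fq) {E : PowerSeries (Polynomial LamF)}
    (hE : HasLogDeriv E (PowerSeries.mk fun n =>
      Polynomial.C (C (c (n + 1) * d (n + 1))) * Polynomial.X ^ (n + 1)))
    (hE0 : PowerSeries.constantCoeff E = 1) :
    PowerSeries.map (powerSumShift d) (genSeries c) =
      PowerSeries.map Polynomial.C (genSeries c) * E := by
  have hconst {B : Type} [CommRing B] (f : LamF →+* B) :
      PowerSeries.constantCoeff (PowerSeries.map f (genSeries c)) = 1 := by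
    rw [← PowerSeries.coeff_zero_eq_constantCoeff_apply, PowerSeries.coeff_map,
      PowerSeries.coeff_zero_eq_constantCoeff_apply, constantCoeff_genSeries, map_one]
  refine ((hasLogDeriv_genSeries c).map (powerSumShift d)).unique
    (b := PowerSeries.map (powerSumShift d) (powerSumSeries c)) ?_ ?_
  · convert ((hasLogDeriv_genSeries c).map Polynomial.C).mul hE
    ext1 n
    simp only [powerSumSeries, map_add, PowerSeries.coeff_map, PowerSeries.coeff_mk, map_mul,
      powerSumShift_C, powerSumShift_X, Nat.succPNat_coe, Nat.succ_eq_add_one]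
    ring
  · rw [hconst, map_mul, hconst, hE0, mul_one]

lemma map_powerSumShift_genSeries_of_eq_neg_pow {c d : ℕ → Fq} {a : Fq}
    (h : ∀ n, c (n + 1) * d (n + 1) = -a ^ (n + 1)) :
    PowerSeries.map (powerSumShift d) (genSeries c) =
      PowerSeries.map Polynomial.C (genSeries c) *
        linearSeries (Polynomial.C (C a) * Polynomial.X) := by
  refine map_powerSumShift_genSeries c d ?_ (constantCoeff_linearSeries _)
  convert hasLogDeriv_linearSeries (Polynomial.C (C a) * Polynomial.X : Polynomial LamF) using 3
  rw [h, map_neg, map_neg, map_pow, map_pow, mul_pow]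
  ring

lemma map_powerSumShift_genSeries_of_eq_one {c d : ℕ → Fq}
    (h : ∀ n, c (n + 1) * d (n + 1) = 1) :
    PowerSeries.map (powerSumShift d) (genSeries c) =
      PowerSeries.map Polynomial.C (genSeries c) * PowerSeries.mk (Polynomial.X ^ ·) := by
  refine map_powerSumShift_genSeries c d ?_ (by simp)
  convert hasLogDeriv_mk_pow (Polynomial.X : Polynomial LamF) using 3
  rw [h, map_one, map_one, one_mul]

lemma hasQuadraticContraction_intCoeff_genSeries {c d : ℕ → Fq} {t : Fq}
    (h : ∀ n, c (n + 1) * d (n + 1) = -(1 + t ^ (n + 1))) :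
    HasQuadraticContraction (powerSumShift d) (intCoeff (genSeries c)) (C t) := by
  refine hasQuadraticContraction_intCoeff (map_powerSumShift_genSeries c d ?_ ?_)
  · convert (hasLogDeriv_linearSeries (Polynomial.X : Polynomial LamF)).mul
      (hasLogDeriv_linearSeries (Polynomial.C (C t) * Polynomial.X)) using 1
    ext1 n
    simp only [PowerSeries.coeff_mk, map_add, h, map_neg, map_one, map_pow]
    ring
  · rw [map_mul, constantCoeff_linearSeries, constantCoeff_linearSeries, one_mul]

end GeneratingSeries

/-! ### Taylor's formula for the annihilation part -/

section Taylor

/-- The operator `n ∂/∂p_n`, the annihilator dual to `p_n` under the Hall inner product. -/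
def scaledPderiv (n : ℕ+) : Module.End Fq LamF :=
  ((n : ℕ) : Fq) • (pderiv n).toLinearMap

lemma scaledPderiv_apply (n : ℕ+) (P : LamF) :
    scaledPderiv n P = ((n : ℕ) : Fq) • pderiv n P :=
  rfl

lemma scaledPderiv_X_mul (m n : ℕ+) (P : LamF) :
    scaledPderiv m (X n * P) =
      X n * scaledPderiv m P + (if m = n then ((n : ℕ) : Fq) else 0) • P := by
  rw [scaledPderiv_apply, scaledPderiv_apply, pderiv_mul, pderiv_X, Pi.single_apply, smul_add,
    mul_smul_comm, add_comm]
  congr 1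
  rcases eq_or_ne m n with rfl | h
  · rw [if_pos rfl, if_pos rfl, one_mul]
  · rw [if_neg h, if_neg h.symm, zero_mul, smul_zero, zero_smul]

lemma commute_scaledPderiv (m n : ℕ+) : Commute (scaledPderiv m) (scaledPderiv n) := by
  have hbracket : ⁅(pderiv m : Derivation Fq LamF LamF), (pderiv n : Derivation Fq LamF LamF)⁆ =
      0 := by
    refine MvPolynomial.derivation_ext fun k => ?_
    rw [Derivation.commutator_apply, pderiv_X, pderiv_X, Pi.single_apply, Pi.single_apply]
    split_ifs <;> simp
  refine LinearMap.ext fun P => ?_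
  have hcomm : pderiv m (pderiv n P) = pderiv n (pderiv m P) :=
    sub_eq_zero.mp (by rw [← Derivation.commutator_apply, hbracket, Derivation.zero_apply])
  simp only [Module.End.mul_apply, scaledPderiv_apply, Derivation.map_smul, hcomm]
  exact smul_comm _ _ _

/-- The commutative algebra generated by the operators `n ∂/∂p_n`, which serves as the target of
`diffOp` because polynomials can be evaluated only in commutative algebras. -/
abbrev adjoinScaledPderivCommSemiring :
    CommSemiring (Algebra.adjoin Fq (Set.range scaledPderiv)) :=
  { (Algebra.adjoin Fq (Set.range scaledPderiv)).toSemiring with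
    mul_comm := (Algebra.isMulCommutative_adjoin Fq (by
      rintro _ ⟨m, rfl⟩ _ ⟨n, rfl⟩
      exact commute_scaledPderiv m n)).is_comm.comm }

/-- The algebra homomorphism `f ↦ f(∂)` with `p_n ↦ n ∂/∂p_n`. -/
def diffOp : LamF →ₐ[Fq] Module.End Fq LamF :=
  letI := adjoinScaledPderivCommSemiring
  (Algebra.adjoin Fq (Set.range scaledPderiv)).val.comp
    (aeval (S₁ := Algebra.adjoin Fq (Set.range scaledPderiv)) fun n =>
      ⟨scaledPderiv n, Algebra.subset_adjoin ⟨n, rfl⟩⟩)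

lemma diffOp_X (n : ℕ+) : diffOp (X n) = scaledPderiv n := by
  let _ := adjoinScaledPderivCommSemiring
  rw [diffOp, AlgHom.comp_apply, aeval_X, Subalgebra.val_apply]

lemma diffOp_mul_X_apply (f : LamF) (n : ℕ+) (P : LamF) :
    diffOp (f * X n) P = diffOp f (scaledPderiv n P) := by
  rw [map_mul, diffOp_X, Module.End.mul_apply]

lemma diffOp_monomial (α : ℕ+ →₀ ℕ) (a : Fq) : diffOp (monomial α a) = a • monOpF α := by
  rw [monomial_eq, Finsupp.prod, Finset.prod, ← Finset.sort_eq α.support (· ≤ ·),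
    Multiset.map_coe, Multiset.prod_coe, C_mul', map_smul, map_list_prod, List.map_map]
  simp only [Function.comp_def, map_pow, diffOp_X]
  rfl

lemma DopF_eq_diffOp (f P : LamF) : DopF f P = diffOp f P := by
  conv_rhs => rw [f.as_sum, map_sum, LinearMap.sum_apply]
  exact Finset.sum_congr rfl fun α _ => by rw [diffOp_monomial]; rfl

lemma diffOp_apply_C (f : LamF) (a : Fq) : diffOp f (C a) = C (constantCoeff f) * C a := by
  induction f using MvPolynomial.induction_on with
  | C b => rw [← MvPolynomial.algebraMap_eq, AlgHom.commutes, MvPolynomial.algebraMap_eq,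
      constantCoeff_C, ← smul_eq_C_mul, Module.algebraMap_end_apply]
  | add f g hf hg => rw [map_add, LinearMap.add_apply, hf, hg, map_add, map_add, add_mul]
  | mul_X f n _ =>
    rw [diffOp_mul_X_apply, scaledPderiv_apply, pderiv_C, smul_zero, map_zero,
      map_mul, constantCoeff_X, mul_zero, map_zero, zero_mul]

/-- The Weyl relation for `f(∂)` and `p_n`. -/
lemma diffOp_apply_X_mul (f : LamF) (n : ℕ+) (P : LamF) :
    diffOp f (X n * P) = X n * diffOp f P + diffOp (scaledPderiv n f) P := by
  induction f using MvPolynomial.induction_on generalizing P with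
  | C b => simp only [← MvPolynomial.algebraMap_eq, AlgHom.commutes, Module.algebraMap_end_apply,
      scaledPderiv_apply, mul_smul_comm, Derivation.map_algebraMap, smul_zero, map_zero,
      LinearMap.zero_apply, add_zero]
  | add f g hf hg =>
    simp only [map_add, LinearMap.add_apply, hf, hg]
    ring
  | mul_X f m ih =>
    have hsymm : (if m = n then ((n : ℕ) : Fq) else 0) = if n = m then ((m : ℕ) : Fq) else 0 := by
      rcases eq_or_ne m n with rfl | h
      · rfl
      · rw [if_neg h, if_neg h.symm]
    rw [diffOp_mul_X_apply, diffOp_mul_X_apply, scaledPderiv_X_mul, map_add, map_smul, ih,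
      mul_comm f, scaledPderiv_X_mul, mul_comm (X m), map_add, LinearMap.add_apply,
      diffOp_mul_X_apply, map_smul, LinearMap.smul_apply, hsymm, add_assoc]

lemma scaledPderiv_genFamF (d : ℕ → Fq) (n : ℕ+) (j : ℕ) :
    scaledPderiv n (genFamF d j) = if n ≤ j then C (d n) * genFamF d (j - n) else 0 := by
  set D : Derivation Fq LamF LamF := ((n : ℕ) : Fq) • pderiv n with hD
  have hprimitive :
      PowerSeries.derivative LamF (PowerSeries.C (C (d n)) * PowerSeries.X ^ (n : ℕ)) =
        PowerSeries.mk fun k => D (PowerSeries.coeff k (powerSumSeries d)) := by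
    ext1 k
    rw [PowerSeries.coeff_derivative, PowerSeries.coeff_C_mul, PowerSeries.coeff_X_pow,
      PowerSeries.coeff_mk, powerSumSeries, PowerSeries.coeff_mk, ← smul_eq_C_mul (X _),
      Derivation.map_smul, hD, Derivation.smul_apply, pderiv_X, Pi.single_apply]
    rcases eq_or_ne (k + 1) (n : ℕ) with h | h
    · rw [if_pos h, if_pos (PNat.eq h : k.succPNat = n), ← h, smul_eq_C_mul, smul_eq_C_mul,
        mul_one, mul_one, map_natCast, Nat.cast_succ]
    · rw [if_neg h, if_neg fun h' : k.succPNat = n => h (congrArg PNat.val h'), mul_zero,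
        zero_mul, smul_zero, smul_zero]
  have hseries := (hasLogDeriv_genSeries d).mk_derivation_eq_mul D hprimitive
    (by simp) (by rw [constantCoeff_genSeries, Derivation.map_one_eq_zero])
  have hcoeff := congrArg (PowerSeries.coeff j) hseries
  rw [mul_assoc, PowerSeries.coeff_mk, PowerSeries.coeff_C_mul, PowerSeries.coeff_X_pow_mul',
    genSeries, PowerSeries.coeff_mk, PowerSeries.coeff_mk, mul_ite, mul_zero] at hcoeff
  exact hcoeff

lemma constantCoeff_genFamF (c : ℕ → Fq) (j : ℕ) :
    constantCoeff (genFamF c j) = if j = 0 then 1 else 0 := by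
  have hseries : PowerSeries.map constantCoeff (genSeries c) = 1 := by
    refine ((hasLogDeriv_genSeries c).map constantCoeff).unique ?_ ?_
    · have hlog : PowerSeries.map constantCoeff (powerSumSeries c) = 0 := by
        ext1 n
        simp [powerSumSeries]
      rw [HasLogDeriv, hlog, zero_mul, Derivation.map_one_eq_zero]
    · simp [← PowerSeries.coeff_zero_eq_constantCoeff_apply, genSeries, genFamF_zero]
  simpa only [PowerSeries.coeff_map, genSeries, PowerSeries.coeff_mk, PowerSeries.coeff_one] using
    congrArg (PowerSeries.coeff j) hseries

lemma coeff_powerSumShift (d : ℕ → Fq) (P : LamF) (j : ℕ) :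
    (powerSumShift d P).coeff j = DopF (genFamF d j) P := by
  rw [DopF_eq_diffOp]
  induction P using MvPolynomial.induction_on generalizing j with
  | C a =>
    rw [powerSumShift_C, Polynomial.coeff_C, diffOp_apply_C, constantCoeff_genFamF, apply_ite C,
      map_one, map_zero, ite_mul, one_mul, zero_mul]
  | add P Q hP hQ => rw [map_add, map_add, Polynomial.coeff_add, hP, hQ]
  | mul_X P n ih =>
    rw [mul_comm P, map_mul, powerSumShift_X, add_mul, mul_assoc, Polynomial.coeff_add,
      Polynomial.coeff_C_mul, Polynomial.coeff_C_mul, Polynomial.coeff_X_pow_mul',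
      diffOp_apply_X_mul, scaledPderiv_genFamF, ih]
    split_ifs
    · rw [ih, ← smul_eq_C_mul, ← smul_eq_C_mul, map_smul diffOp, LinearMap.smul_apply]
    · rw [mul_zero, map_zero, LinearMap.zero_apply]

lemma natDegree_powerSumShift_le (d : ℕ → Fq) (P : LamF) :
    (powerSumShift d P).natDegree ≤ wboundF P := by
  rw [powerSumShift, coe_eval₂Hom, eval₂_eq]
  refine Polynomial.natDegree_sum_le_of_forall_le _ _ fun α hα => ?_
  refine (Polynomial.natDegree_C_mul_le _ _).trans <| (Polynomial.natDegree_prod_le _ _).trans <|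
    (Finset.sum_le_sum fun n _ => ?_).trans
      (Finset.le_sup (f := fun α : ℕ+ →₀ ℕ => α.sum fun i k => (i : ℕ) * k) hα)
  refine Polynomial.natDegree_pow_le.trans ?_
  rw [mul_comm]
  refine Nat.mul_le_mul_right _ ?_
  compute_degree

lemma modeFunctional_powerSumShift (H : ℤ → LamF) (c : ℤ) (d : ℕ → Fq) (P : LamF) :
    modeFunctional H c (powerSumShift d P) =
      ∑ j ∈ Finset.range (wboundF P + 1), H (c + j) * DopF (genFamF d j) P := by
  rw [modeFunctional_eq_sum_range H c (Nat.lt_succ_of_le (natDegree_powerSumShift_le d P))]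
  exact Finset.sum_congr rfl fun j _ => by rw [coeff_powerSumShift, mul_comm]

end Taylor

/-! ### The integral form -/

section IntegralForm

/-- The integral form `ℤ[q, q⁻¹][h₁, h₂, …]` of the ring of symmetric functions. -/
def integralForm : Subring LamF :=
  Subring.closure ({C qq, C qq⁻¹} ∪ Set.range hhF)

lemma qq_ne_zero : qq ≠ 0 :=
  RatFunc.X_ne_zero

lemma C_qq_mem_integralForm : C qq ∈ integralForm :=
  Subring.subset_closure (by simp)

lemma C_qq_inv_mem_integralForm : C qq⁻¹ ∈ integralForm :=
  Subring.subset_closure (by simp)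

lemma hhF_mem_integralForm (k : ℕ) : hhF k ∈ integralForm :=
  Subring.subset_closure (by simp)

lemma C_qq_zpow_mem_integralForm (k : ℤ) : C (qq ^ k) ∈ integralForm := by
  rcases Int.eq_nat_or_neg k with ⟨n, rfl | rfl⟩
  · rw [zpow_natCast, C_pow]
    exact pow_mem C_qq_mem_integralForm n
  · rw [zpow_neg, ← inv_zpow, zpow_natCast, C_pow]
    exact pow_mem C_qq_inv_mem_integralForm n

lemma genSeries_pow_mem {a : Fq} (ha : C a ∈ integralForm) :
    genSeries (fun n => a ^ n) ∈ (PowerSeries.map integralForm.subtype).range := by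
  refine mem_range_map_subtype_iff.mpr fun n => ?_
  have hscale := genFamF_pow_mul (fun _ => 1) a n
  simp only [mul_one] at hscale
  rw [genSeries, PowerSeries.coeff_mk, hscale]
  exact mul_mem (pow_mem ha n) (hhF_mem_integralForm n)

/-- The series is `h(qz) h(q⁻¹z)`, where `h(z) = ∑ h_k z^k`. -/
lemma genSeries_HpF_mem :
    genSeries (fun n => (1 + qq ^ (2 * n)) * qq⁻¹ ^ n) ∈
      (PowerSeries.map integralForm.subtype).range := by
  have hsum : (fun n => (1 + qq ^ (2 * n)) * qq⁻¹ ^ n) =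
      (fun n => qq ^ n) + fun n => qq⁻¹ ^ n := by
    funext n
    have hcancel : qq ^ n * qq⁻¹ ^ n = 1 := by
      rw [← mul_pow, mul_inv_cancel₀ qq_ne_zero, one_pow]
    rw [Pi.add_apply, two_mul, pow_add]
    linear_combination qq ^ n * hcancel
  rw [hsum, genSeries_add]
  exact mul_mem (genSeries_pow_mem C_qq_mem_integralForm)
    (genSeries_pow_mem C_qq_inv_mem_integralForm)

/-- The series is the inverse of `h(z) h(q²z)`, where `h(z) = ∑ h_k z^k`. -/
lemma genSeries_HmF_mem :
    genSeries (fun n => -(1 + qq ^ (2 * n))) ∈ (PowerSeries.map integralForm.subtype).range := by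
  refine mem_range_map_subtype_of_mul_eq_one
    (mul_mem (genSeries_pow_mem (a := 1) (by rw [C_1]; exact one_mem _))
      (genSeries_pow_mem (a := qq ^ 2) (by rw [C_pow]; exact pow_mem C_qq_mem_integralForm 2)))
    (by rw [map_mul, constantCoeff_genSeries, constantCoeff_genSeries, one_mul]) ?_
  rw [← genSeries_add, ← genSeries_add, ← genSeries_zero]
  congr 1
  funext n
  simp only [Pi.add_apply, Pi.zero_apply, one_pow, pow_mul, add_neg_cancel]

lemma polynomialC_mem_range {P : LamF} (hP : P ∈ integralForm) :
    Polynomial.C P ∈ (Polynomial.mapRingHom integralForm.subtype).range :=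
  ⟨Polynomial.C ⟨P, hP⟩, Polynomial.map_C _⟩

lemma polynomialX_mem_range :
    Polynomial.X ∈ (Polynomial.mapRingHom integralForm.subtype).range :=
  ⟨Polynomial.X, Polynomial.map_X _⟩

lemma powerSumShift_mem_range {d : ℕ → Fq} {E : PowerSeries (Polynomial LamF)}
    (hE : E ∈ (PowerSeries.map (Polynomial.mapRingHom integralForm.subtype).range.subtype).range)
    (h : PowerSeries.map (powerSumShift d) (genSeries fun _ => 1) =
      PowerSeries.map Polynomial.C (genSeries fun _ => 1) * E) {P : LamF}
    (hP : P ∈ integralForm) :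
    powerSumShift d P ∈ (Polynomial.mapRingHom integralForm.subtype).range := by
  have hC : PowerSeries.map Polynomial.C (genSeries fun _ => 1) ∈
      (PowerSeries.map (Polynomial.mapRingHom integralForm.subtype).range.subtype).range :=
    mem_range_map_subtype_iff.mpr fun n => by
      rw [PowerSeries.coeff_map, genSeries, PowerSeries.coeff_mk]
      exact polynomialC_mem_range (hhF_mem_integralForm n)
  suffices integralForm ≤
      (Polynomial.mapRingHom integralForm.subtype).range.comap (powerSumShift d) from this hP
  refine Subring.closure_le.mpr ?_
  rintro _ ((rfl | rfl) | ⟨k, rfl⟩) <;> rw [SetLike.mem_coe, Subring.mem_comap]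
  · rw [powerSumShift_C]
    exact polynomialC_mem_range C_qq_mem_integralForm
  · rw [powerSumShift_C]
    exact polynomialC_mem_range C_qq_inv_mem_integralForm
  · have hmem := mem_range_map_subtype_iff.mp (mul_mem hC hE) k
    rwa [← h, PowerSeries.coeff_map, genSeries, PowerSeries.coeff_mk] at hmem

lemma powerSumShift_neg_qq_inv_pow_mem_range {P : LamF} (hP : P ∈ integralForm) :
    powerSumShift (fun n => -qq⁻¹ ^ n) P ∈
      (Polynomial.mapRingHom integralForm.subtype).range := by
  have ha := mul_mem (polynomialC_mem_range C_qq_inv_mem_integralForm) polynomialX_mem_range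
  refine powerSumShift_mem_range ⟨linearSeries ⟨_, ha⟩, ?_⟩
    (map_powerSumShift_genSeries_of_eq_neg_pow fun n => one_mul _) hP
  simp [linearSeries]

lemma powerSumShift_one_mem_range {P : LamF} (hP : P ∈ integralForm) :
    powerSumShift (fun _ => 1) P ∈ (Polynomial.mapRingHom integralForm.subtype).range :=
  powerSumShift_mem_range
    (mem_range_map_subtype_iff.mpr fun n => by
      rw [PowerSeries.coeff_mk]
      exact pow_mem polynomialX_mem_range n)
    (map_powerSumShift_genSeries_of_eq_one fun _ => mul_one 1) hP

end IntegralForm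

/-! ### Schur functions span the integral form -/

section SchurSpan

/-- The `ℤ`-span of the Schur functions. -/
def schurSpan : AddSubgroup LamF :=
  AddSubgroup.closure {P | ∃ (l : ℕ) (lam : Fin l → ℕ), Antitone lam ∧
    P = schurF fun a => (lam a : ℤ)}

lemma hZF_natCast (n : ℕ) : hZF n = hhF n := by
  rw [hZF, if_pos n.cast_nonneg, Int.toNat_natCast]

lemma hZF_mem_integralForm (n : ℤ) : hZF n ∈ integralForm := by
  rw [hZF]
  split_ifs
  exacts [hhF_mem_integralForm _, zero_mem _]

lemma schurF_mem_integralForm {l : ℕ} (ρ : Fin l → ℤ) : schurF ρ ∈ integralForm := by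
  rw [schurF, Matrix.det_apply]
  refine sum_mem fun σ _ => ?_
  rw [Units.smul_def]
  exact zsmul_mem (prod_mem fun i _ => hZF_mem_integralForm _) _

lemma sum_mul_lt_sum_comp_perm_mul {ι R : Type*} [Fintype ι] [LinearOrder ι] [CommRing R]
    [LinearOrder R] [IsStrictOrderedRing R] {f g : ι → R} (hf : StrictAnti f) (hg : StrictMono g)
    {σ : Equiv.Perm ι} (hσ : σ ≠ 1) : ∑ i, f i * g i < ∑ i, f (σ i) * g i := by
  have hanti : Antivary f g := fun i j hij => (hf (hg.lt_iff_lt.mp hij)).le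
  refine hanti.sum_mul_lt_sum_comp_perm_mul_iff.mpr fun hv => hσ ?_
  have hmono : StrictMono σ := by
    refine Monotone.strictMono_of_injective (fun i j hij => ?_) σ.injective
    rcases hij.eq_or_lt with rfl | hij
    · exact le_rfl
    · exact hf.le_iff_ge.mp (hv (hg hij))
  exact Equiv.ext fun i => congrArg (fun e : ι ≃o ι => e i)
    (Subsingleton.elim (hmono.orderIsoOfSurjective σ σ.surjective) (OrderIso.refl ι))

/-- Strict rearrangement, applied to `lam i - i` and `i`. -/
lemma sum_sq_lt_sum_sq_perm {l : ℕ} {lam : Fin l → ℤ} (h : Antitone lam)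
    {σ : Equiv.Perm (Fin l)} (hσ : σ ≠ 1) :
    ∑ i, lam i ^ 2 < ∑ i, (lam (σ i) - (σ i).1 + i.1) ^ 2 := by
  set f : Fin l → ℤ := fun i => lam i - i.1 with hf
  set g : Fin l → ℤ := fun i => i.1 with hg
  have hgmono : StrictMono g := fun i j hij => Int.ofNat_lt.mpr hij
  have hfanti : StrictAnti f := fun i j hij => by
    have hle := h hij.le
    have hlt := hgmono hij
    simp only [hf, hg] at hlt ⊢
    linarith
  have hexpand (τ : Equiv.Perm (Fin l)) : ∑ i, (lam (τ i) - (τ i).1 + i.1) ^ 2 =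
      ∑ i, f i ^ 2 + 2 * ∑ i, f (τ i) * g i + ∑ i, g i ^ 2 := by
    rw [← Equiv.sum_comp τ fun i => f i ^ 2, Finset.mul_sum, ← Finset.sum_add_distrib,
      ← Finset.sum_add_distrib]
    exact Finset.sum_congr rfl fun i _ => by rw [hf, hg]; ring
  have hone : ∑ i, lam i ^ 2 = ∑ i, f i ^ 2 + 2 * ∑ i, f i * g i + ∑ i, g i ^ 2 := by
    simpa using hexpand 1
  rw [hone, hexpand]
  linarith [sum_mul_lt_sum_comp_perm_mul hfanti hgmono hσ]

lemma prod_hZF_eq_zero_or_eq_prod_hhF {l : ℕ} {lam : Fin l → ℕ} (h : Antitone lam)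
    {σ : Equiv.Perm (Fin l)} (hσ : σ ≠ 1) :
    ∏ i, hZF (lam (σ i) - (σ i).1 + i.1) = 0 ∨
      ∃ μ : Fin l → ℕ, ∑ i, μ i = ∑ i, lam i ∧ ∑ i, lam i ^ 2 < ∑ i, μ i ^ 2 ∧
        ∏ i, hZF (lam (σ i) - (σ i).1 + i.1) = ∏ i, hhF (μ i) := by
  by_cases hneg : ∃ i, (lam (σ i) : ℤ) - (σ i).1 + i.1 < 0
  · obtain ⟨i, hi⟩ := hneg
    exact .inl (Finset.prod_eq_zero (Finset.mem_univ i) (by rw [hZF, if_neg hi.not_ge]))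
  · push Not at hneg
    choose μ hμ using fun i => Int.eq_ofNat_of_zero_le (hneg i)
    have hsum : ∑ i, (μ i : ℤ) = ∑ i, (lam i : ℤ) := by
      simp only [← hμ]
      rw [Finset.sum_add_distrib, Finset.sum_sub_distrib,
        Equiv.sum_comp σ (fun i => (lam i : ℤ)), Equiv.sum_comp σ (fun i => (i.1 : ℤ)),
        sub_add_cancel]
    have hlt := sum_sq_lt_sum_sq_perm (fun i j hij => Int.ofNat_le.mpr (h hij)) hσ
    simp only [hμ] at hlt
    exact .inr ⟨μ, by exact_mod_cast hsum, by exact_mod_cast hlt, by simp only [hμ, hZF_natCast]⟩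

/-- In the Jacobi–Trudi determinant of `s_λ`, the diagonal contributes `h_λ`. -/
lemma prod_hhF_mem_schurSpan_of_antitone {l : ℕ} {lam : Fin l → ℕ} (h : Antitone lam)
    (hlarger : ∀ μ : Fin l → ℕ, ∑ i, μ i = ∑ i, lam i → ∑ i, lam i ^ 2 < ∑ i, μ i ^ 2 →
      ∏ i, hhF (μ i) ∈ schurSpan) :
    ∏ i, hhF (lam i) ∈ schurSpan := by
  have hdet : schurF (fun a => (lam a : ℤ)) = ∏ i, hhF (lam i) +
      ∑ σ ∈ Finset.univ.erase (1 : Equiv.Perm (Fin l)), Equiv.Perm.sign σ •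
        ∏ i, hZF (lam (σ i) - (σ i).1 + i.1) := by
    rw [schurF, Matrix.det_apply, ← Finset.add_sum_erase _ _ (Finset.mem_univ 1)]
    congr 1
    simp [hZF_natCast]
  rw [← sub_eq_iff_eq_add.mpr hdet]
  refine sub_mem (AddSubgroup.subset_closure ⟨l, lam, h, rfl⟩) (sum_mem fun σ hσ => ?_)
  rw [Units.smul_def]
  refine zsmul_mem ?_ _
  rcases prod_hZF_eq_zero_or_eq_prod_hhF h (Finset.ne_of_mem_erase hσ) with
    hzero | ⟨μ, hsum, hlt, hprod⟩
  · exact hzero ▸ zero_mem _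
  · exact hprod ▸ hlarger μ hsum hlt

/-- The sum of squares of a tuple of naturals is at most the square of its sum, so it can only
increase finitely often while the sum is fixed. -/
lemma prod_hhF_mem_schurSpan {l : ℕ} (lam : Fin l → ℕ) : ∏ i, hhF (lam i) ∈ schurSpan := by
  induction hM : (∑ i, lam i) ^ 2 - ∑ i, lam i ^ 2 using Nat.strong_induction_on
    generalizing lam with
  | _ M ih =>
    let τ := Tuple.sort (OrderDual.toDual ∘ lam)
    have hτ : Antitone (lam ∘ τ) := fun i j hij =>
      Tuple.monotone_sort (OrderDual.toDual ∘ lam) hij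
    rw [← Equiv.prod_comp τ]
    refine prod_hhF_mem_schurSpan_of_antitone hτ fun μ hsum hlt => ih _ ?_ μ rfl
    rw [Equiv.sum_comp τ] at hsum
    rw [Equiv.sum_comp τ fun i => lam i ^ 2] at hlt
    have hle : ∑ i, μ i ^ 2 ≤ (∑ i, μ i) ^ 2 :=
      Finset.sum_sq_le_sq_sum_of_nonneg fun i _ => Nat.zero_le _
    rw [hsum] at hle ⊢
    lia

lemma single_qq_zpow_smul_mem (k m : ℤ) {P : LamF} (hP : P ∈ schurSpan) :
    Finsupp.single m (qq ^ k • P) ∈ SchurLattice := by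
  suffices schurSpan ≤ SchurLattice.comap
      ((Finsupp.singleAddHom m).comp (DistribSMul.toAddMonoidHom LamF (qq ^ k))) from this hP
  refine (AddSubgroup.closure_le _).mpr ?_
  rintro _ ⟨l, lam, hlam, rfl⟩
  exact AddSubgroup.subset_closure ⟨k, m, l, lam, hlam, (Finsupp.smul_single _ _ _).symm⟩

lemma exists_eq_qq_zpow_smul_prod_hhF {P : LamF}
    (hP : P ∈ Submonoid.closure ({C qq, C qq⁻¹} ∪ Set.range hhF)) :
    ∃ (k : ℤ) (L : List ℕ), P = qq ^ k • (L.map hhF).prod := by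
  induction hP using Submonoid.closure_induction with
  | mem P hP =>
    rcases hP with (rfl | rfl) | ⟨k, rfl⟩
    · exact ⟨1, [], by simp [smul_eq_C_mul]⟩
    · exact ⟨-1, [], by simp [smul_eq_C_mul]⟩
    · exact ⟨0, [k], by simp⟩
  | one => exact ⟨0, [], by simp⟩
  | mul P Q _ _ hP hQ =>
    obtain ⟨k, L, rfl⟩ := hP
    obtain ⟨k', L', rfl⟩ := hQ
    exact ⟨k + k', L ++ L', by
      rw [List.map_append, List.prod_append, smul_mul_smul_comm, zpow_add₀ qq_ne_zero]⟩

lemma single_mem_schurLattice (m : ℤ) {P : LamF} (hP : P ∈ integralForm) :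
    Finsupp.single m P ∈ SchurLattice := by
  suffices AddSubgroup.closure (Submonoid.closure ({C qq, C qq⁻¹} ∪ Set.range hhF) : Set LamF) ≤
      SchurLattice.comap (Finsupp.singleAddHom m) from this (Subring.mem_closure_iff.mp hP)
  refine (AddSubgroup.closure_le _).mpr fun P hP => ?_
  obtain ⟨k, L, rfl⟩ := exists_eq_qq_zpow_smul_prod_hhF hP
  refine single_qq_zpow_smul_mem k m ?_
  rw [← Fin.prod_univ_fun_getElem]
  exact prod_hhF_mem_schurSpan _

theorem mem_schurLattice_iff {w : W} : w ∈ SchurLattice ↔ ∀ m, w m ∈ integralForm := by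
  refine ⟨fun hw m => ?_, fun hw => ?_⟩
  · suffices SchurLattice ≤ integralForm.toAddSubgroup.comap (Finsupp.applyAddHom m) from this hw
    refine (AddSubgroup.closure_le _).mpr ?_
    rintro _ ⟨k, m', l, lam, -, rfl⟩
    rw [SetLike.mem_coe, AddSubgroup.mem_comap, Finsupp.applyAddHom_apply, Finsupp.smul_apply,
      Finsupp.single_apply, smul_eq_C_mul]
    refine integralForm.mul_mem (C_qq_zpow_mem_integralForm k) ?_
    split_ifs
    exacts [schurF_mem_integralForm _, zero_mem _]
  · rw [← w.sum_single]
    exact sum_mem fun m _ => single_mem_schurLattice m (hw m)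

end SchurSpan

/-! ### Divided powers of the currents -/

section DividedPowers

lemma qq_pow_ne_one {n : ℕ} (hn : n ≠ 0) : qq ^ n ≠ 1 := by
  intro h
  rw [qq, ← RatFunc.algebraMap_X, ← map_pow, ← map_one (algebraMap (Polynomial ℚ) (RatFunc ℚ))] at h
  have hdeg := congrArg Polynomial.natDegree (RatFunc.algebraMap_injective ℚ h)
  rw [Polynomial.natDegree_X_pow, Polynomial.natDegree_one] at hdeg
  exact hn hdeg

lemma qq_pow_sub_inv_pow_ne_zero {n : ℕ} (hn : n ≠ 0) : qq ^ n - qq⁻¹ ^ n ≠ 0 := by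
  intro h
  refine qq_pow_ne_one (mul_ne_zero two_ne_zero hn) ?_
  rw [two_mul, pow_add]
  nth_rw 2 [sub_eq_zero.mp h]
  rw [← mul_pow, mul_inv_cancel₀ qq_ne_zero, one_pow]

lemma qfact_ne_zero (r : ℕ) : qfact r ≠ 0 := by
  refine Finset.prod_ne_zero_iff.mpr fun k _ =>
    div_ne_zero (qq_pow_sub_inv_pow_ne_zero k.succ_ne_zero) ?_
  simpa only [pow_one] using qq_pow_sub_inv_pow_ne_zero one_ne_zero

lemma geom_sum_sq_eq_pow_mul {K : Type*} [Field K] {u : K} (hu : u ≠ 0) (hu2 : u ^ 2 ≠ 1) (k : ℕ) :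
    ∑ j ∈ Finset.range (k + 1), (u ^ 2) ^ j =
      u ^ k * ((u ^ (k + 1) - u⁻¹ ^ (k + 1)) / (u - u⁻¹)) := by
  have hsub : u ^ 2 - 1 ≠ 0 := sub_ne_zero.mpr hu2
  have hdenom : u - u⁻¹ = (u ^ 2 - 1) / u := by field_simp
  rw [geom_sum_eq hu2, hdenom, inv_pow]
  field_simp
  ring

lemma gaussFactorial_qq_sq (r : ℕ) : ∃ e : ℤ, gaussFactorial (qq ^ 2) r = qq ^ e * qfact r := by
  refine ⟨((∑ k ∈ Finset.range r, k : ℕ) : ℤ), ?_⟩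
  rw [gaussFactorial, qfact, zpow_natCast, ← Finset.prod_pow_eq_pow_sum, ← Finset.prod_mul_distrib]
  exact Finset.prod_congr rfl fun k _ =>
    geom_sum_sq_eq_pow_mul qq_ne_zero (qq_pow_ne_one two_ne_zero) k

lemma gaussFactorial_qq_inv_sq (r : ℕ) :
    ∃ e : ℤ, gaussFactorial (qq⁻¹ ^ 2) r = qq ^ e * qfact r := by
  refine ⟨-((∑ k ∈ Finset.range r, k : ℕ) : ℤ), ?_⟩
  rw [gaussFactorial, qfact, zpow_neg, ← inv_zpow, zpow_natCast, ← Finset.prod_pow_eq_pow_sum,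
    ← Finset.prod_mul_distrib]
  refine Finset.prod_congr rfl fun k _ => ?_
  rw [geom_sum_sq_eq_pow_mul (inv_ne_zero qq_ne_zero)
    (by rw [inv_pow]; exact inv_ne_one.mpr (qq_pow_ne_one two_ne_zero)) k, inv_inv,
    ← neg_sub (qq ^ (k + 1)), ← neg_sub qq, neg_div_neg_eq]

/-- The common shape of the currents `X_n^±`, with `ε = ±1`: the vector `P e^{mα}` goes to
`Q e^{(m+ε)α}`, where `Q` is the `a - 2εm` mode of the substitution `powerSumShift d P` weighted
by `H`. -/
def vertexOp (H : ℤ → LamF) (d : ℕ → Fq) (a : ℤ) (ε : ℤˣ) : AddMonoid.End W :=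
  Finsupp.liftAddHom fun m => (Finsupp.singleAddHom (m + ε)).comp
    ((modeFunctional H (a - 2 * ε * m)).toAddMonoidHom.comp (powerSumShift d).toAddMonoidHom)

lemma vertexOp_apply (H : ℤ → LamF) (d : ℕ → Fq) (a : ℤ) (ε : ℤˣ) (w : W) :
    vertexOp H d a ε w = w.sum fun m P =>
      Finsupp.single (m + ε) (modeFunctional H (a - 2 * ε * m) (powerSumShift d P)) :=
  rfl

lemma iterate_vertexOp_single (H : ℤ → LamF) (d : ℕ → Fq) (a : ℤ) (ε : ℤˣ) (m : ℤ) (P : LamF)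
    (r : ℕ) :
    (vertexOp H d a ε)^[r] (Finsupp.single m P) =
      Finsupp.single (m + ε * r) (iterVertex H (powerSumShift d) (a - 2 * ε * m) P r) := by
  induction r with
  | zero => rw [Function.iterate_zero_apply, Nat.cast_zero, mul_zero, add_zero, iterVertex]
  | succ r ih =>
    have hsq : (ε : ℤ) * ε = 1 := by rw [← Units.val_mul, Int.units_mul_self, Units.val_one]
    have hmode : a - 2 * ε * (m + ε * r) = a - 2 * ε * m - 2 * r := by
      linear_combination (-2 * r : ℤ) * hsq
    rw [Function.iterate_succ_apply', ih, vertexOp_apply,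
      Finsupp.sum_single_index (by rw [map_zero, map_zero, Finsupp.single_zero]), hmode, iterVertex,
      Nat.cast_succ, mul_add_one, add_assoc]

lemma divpow_vertexOp_single_mem {c d : ℕ → Fq} {t : Fq} {r : ℕ}
    (hcd : ∀ n, c (n + 1) * d (n + 1) = -(1 + t ^ (n + 1)))
    (hc : genSeries c ∈ (PowerSeries.map integralForm.subtype).range)
    (hd : ∀ P ∈ integralForm,
      powerSumShift d P ∈ (Polynomial.mapRingHom integralForm.subtype).range)
    (ht : ∃ e : ℤ, gaussFactorial t r = qq ^ e * qfact r) (a : ℤ) (ε : ℤˣ) (m : ℤ) {P : LamF}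
    (hP : P ∈ integralForm) :
    divpow (vertexOp (intCoeff (genSeries c)) d a ε) r (Finsupp.single m P) ∈ SchurLattice := by
  obtain ⟨Q, hQ, hiter⟩ := exists_mem_iterVertex_eq_gaussFactorial_mul
    (hasQuadraticContraction_intCoeff_genSeries hcd) (powerSumShift_C d t)
    (fun r i P h => rename_swap_iterSubst_powerSumShift d h P) (intCoeff_mem_of_mem_range hc) hd
    (a - 2 * ε * m) hP r
  obtain ⟨e, he⟩ := ht
  have hfac : gaussFactorial (C t : LamF) r = C (qq ^ e * qfact r) := by
    rw [← he]
    simp only [gaussFactorial, map_prod, map_sum, map_pow]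
  rw [divpow, iterate_vertexOp_single, hiter, hfac, ← smul_eq_C_mul, Finsupp.smul_single,
    smul_smul, mul_left_comm, inv_mul_cancel₀ (qfact_ne_zero r), mul_one, smul_eq_C_mul]
  exact single_mem_schurLattice _ (mul_mem (C_qq_zpow_mem_integralForm e) hQ)

lemma divpow_mem_of_forall_single {L : AddSubgroup W} {f : AddMonoid.End W} {r : ℕ} {w : W}
    (h : ∀ m, divpow f r (Finsupp.single m (w m)) ∈ L) : divpow f r w ∈ L := by
  have hpow : ⇑(f ^ r) = f^[r] := AddMonoid.End.coe_pow W f r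
  have hsum : divpow f r w = ∑ m ∈ w.support, divpow f r (Finsupp.single m (w m)) := by
    simp only [divpow, ← hpow]
    rw [← Finset.smul_sum, ← map_sum]
    exact congrArg (fun v => (qfact r)⁻¹ • (f ^ r) v) w.sum_single.symm
  rw [hsum]
  exact sum_mem fun m _ => h m

lemma HZp_eq_intCoeff (n : ℤ) :
    HZp n = intCoeff (genSeries fun n => (1 + qq ^ (2 * n)) * qq⁻¹ ^ n) n := by
  rw [intCoeff, genSeries, PowerSeries.coeff_mk]
  rfl

lemma HZm_eq_intCoeff (n : ℤ) :
    HZm n = intCoeff (genSeries fun n => -(1 + qq ^ (2 * n))) n := by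
  rw [intCoeff, genSeries, PowerSeries.coeff_mk]
  rfl

lemma Xp_eq_vertexOp (i n : ℤ) :
    Xp i n = vertexOp (intCoeff (genSeries fun n => (1 + qq ^ (2 * n)) * qq⁻¹ ^ n))
      (fun n => -qq⁻¹ ^ n) (-n - 1 - i) 1 := by
  funext w
  rw [vertexOp_apply, Xp]
  refine Finsupp.sum_congr fun m _ => ?_
  rw [modeFunctional_powerSumShift, Units.val_one, mul_one]
  congr 1
  refine Finset.sum_congr rfl fun j _ => ?_
  rw [HZp_eq_intCoeff, show (j : ℤ) - n - 1 - 2 * m - i = -n - 1 - i - 2 * m + j by ring]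
  rfl

lemma Xm_eq_vertexOp (i n : ℤ) :
    Xm i n = vertexOp (intCoeff (genSeries fun n => -(1 + qq ^ (2 * n)))) (fun _ => 1)
      (i - n - 1) (-1) := by
  funext w
  rw [vertexOp_apply, Xm]
  refine Finsupp.sum_congr fun m _ => ?_
  rw [modeFunctional_powerSumShift, Units.val_neg, Units.val_one, ← sub_eq_add_neg]
  congr 1
  refine Finset.sum_congr rfl fun j _ => ?_
  rw [HZm_eq_intCoeff, show (j : ℤ) + 2 * m + i - n - 1 = i - n - 1 - 2 * -1 * m + j by ring]
  rfl

theorem divpow_Xp_mem_schurLattice (i n : ℤ) (r : ℕ) {w : W} (hw : w ∈ SchurLattice) :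
    divpow (Xp i n) r w ∈ SchurLattice := by
  have hcd (k : ℕ) : (1 + qq ^ (2 * (k + 1))) * qq⁻¹ ^ (k + 1) * -qq⁻¹ ^ (k + 1) =
      -(1 + (qq⁻¹ ^ 2) ^ (k + 1)) := by
    have hcancel : qq ^ (k + 1) * qq⁻¹ ^ (k + 1) = 1 := by
      rw [← mul_pow, mul_inv_cancel₀ qq_ne_zero, one_pow]
    rw [← pow_mul, two_mul, pow_add]
    linear_combination -(qq ^ (k + 1) * qq⁻¹ ^ (k + 1) + 1) * hcancel
  rw [Xp_eq_vertexOp]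
  exact divpow_mem_of_forall_single fun m => divpow_vertexOp_single_mem hcd genSeries_HpF_mem
    (fun P => powerSumShift_neg_qq_inv_pow_mem_range) (gaussFactorial_qq_inv_sq r) _ _ m
    (mem_schurLattice_iff.mp hw m)

theorem divpow_Xm_mem_schurLattice (i n : ℤ) (r : ℕ) {w : W} (hw : w ∈ SchurLattice) :
    divpow (Xm i n) r w ∈ SchurLattice := by
  rw [Xm_eq_vertexOp]
  exact divpow_mem_of_forall_single fun m => divpow_vertexOp_single_mem
    (fun k => by rw [mul_one, pow_mul]) genSeries_HmF_mem
    (fun P => powerSumShift_one_mem_range) (gaussFactorial_qq_sq r) _ _ m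
    (mem_schurLattice_iff.mp hw m)

end DividedPowers

theorem schur_lattice_divided_powers_general (i n : ℤ) (r : ℕ) {w : W} (hw : w ∈ SchurLattice) :
    divpow (Xp i n) r w ∈ SchurLattice ∧ divpow (Xm i n) r w ∈ SchurLattice :=
  ⟨divpow_Xp_mem_schurLattice i n r hw, divpow_Xm_mem_schurLattice i n r hw⟩

/-- integrality of the Schur lattice under divided powers: for
`i ∈ {0,1}`, `n ∈ ℤ` and `r ≥ 1`, `X_n^{+(r)}(ℒ_i) ⊆ ℒ_i` and `X_n^{−(r)}(ℒ_i) ⊆ ℒ_i`. -/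
theorem schur_lattice_divided_powers (i : ℤ) (hi : i = 0 ∨ i = 1) (n : ℤ) (r : ℕ)
    (hr : 1 ≤ r) (w : W) (hw : w ∈ SchurLattice) :
    divpow (Xp i n) r w ∈ SchurLattice ∧ divpow (Xm i n) r w ∈ SchurLattice := by
  exact schur_lattice_divided_powers_general i n r hw
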